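/- arXiv:1302.6904 — 3 statements merged into one kernel-verified Lean document; each statement's English description precedes it below -/
import Mathlib

section
/- Let p be an odd prime, q a power of p, and let P be a Sylow p-subgroup of the symplectic group Sp_4(F_q). Then the number of conjugacy classes of P equals 2v² + 4v + 1, where v = q − 1. -/
open Matrix

namespace SpFour
variable {F : Type*} [Field F]

def um (a x y z : F) : Matrix (Fin 2 ⊕ Fin 2) (Fin 2 ⊕ Fin 2) F :=
  fromBlocks !![1, a; 0, 1] !![x - a * y, y; y - a * z, z] 0 !![1, 0; -a, 1]

lemma um_mul (a x y z a' x' y' z' : F) : um a x y z * um a' x' y' z' =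
    um (a + a') (x + x' + 2 * a * y' + a ^ 2 * z') (y + y' + a * z') (z + z') := by
  rw [um, um, um, fromBlocks_multiply, fromBlocks_inj]
  refine ⟨?_, ?_, ?_, ?_⟩ <;> ext i j <;> fin_cases i <;> fin_cases j <;>
    simp <;> ring

lemma um_zero : um (0 : F) 0 0 0 = 1 := by
  rw [um, ← fromBlocks_one, fromBlocks_inj]
  refine ⟨?_, ?_, ?_, ?_⟩ <;> ext i j <;> fin_cases i <;> fin_cases j <;> simp

lemma um_mem (a x y z : F) : um a x y z ∈ symplecticGroup (Fin 2) F := by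
  rw [SymplecticGroup.mem_iff, um, J, fromBlocks_transpose, fromBlocks_multiply,
    fromBlocks_multiply, fromBlocks_inj]
  refine ⟨?_, ?_, ?_, ?_⟩ <;> ext i j <;> fin_cases i <;> fin_cases j <;>
    simp [Matrix.vecMul, dotProduct, Fin.sum_univ_two] <;> ring

lemma um_inj {a x y z a' x' y' z' : F} :
    um a x y z = um a' x' y' z' ↔ a = a' ∧ x = x' ∧ y = y' ∧ z = z' := by
  constructor
  · intro h
    have h1 := congrFun (congrFun h (Sum.inl 0)) (Sum.inl 1)
    have h2 := congrFun (congrFun h (Sum.inl 0)) (Sum.inr 0)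
    have h3 := congrFun (congrFun h (Sum.inl 0)) (Sum.inr 1)
    have h4 := congrFun (congrFun h (Sum.inl 1)) (Sum.inr 1)
    simp [um] at h1 h2 h3 h4
    subst h1 h3 h4
    simpa using h2
  · rintro ⟨rfl, rfl, rfl, rfl⟩; rfl

def U (F : Type*) [Field F] : Subgroup (symplecticGroup (Fin 2) F) where
  carrier := {g | ∃ a x y z : F, (g : Matrix (Fin 2 ⊕ Fin 2) (Fin 2 ⊕ Fin 2) F) = um a x y z}
  one_mem' := ⟨0, 0, 0, 0, um_zero.symm⟩
  mul_mem' := by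
    rintro g h ⟨a, x, y, z, hg⟩ ⟨a', x', y', z', hh⟩
    exact ⟨_, _, _, _, by rw [Submonoid.coe_mul, hg, hh, um_mul]⟩
  inv_mem' := by
    rintro g ⟨a, x, y, z, hg⟩
    refine ⟨-a, -x + 2 * a * y - a ^ 2 * z, -y + a * z, -z, ?_⟩
    have : g⁻¹ = ⟨um (-a) (-x + 2 * a * y - a ^ 2 * z) (-y + a * z) (-z), um_mem _ _ _ _⟩ := by
      rw [inv_eq_iff_mul_eq_one]
      apply Subtype.ext
      rw [Submonoid.coe_mul, hg, um_mul]
      rw [Submonoid.coe_one, ← um_zero, um_inj]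
      refine ⟨?_, ?_, ?_, ?_⟩ <;> ring
    rw [this]

noncomputable def uEquiv (F : Type*) [Field F] : (F × F × F × F) ≃ U F :=
  Equiv.ofBijective
    (fun t => ⟨⟨um t.1 t.2.1 t.2.2.1 t.2.2.2, um_mem _ _ _ _⟩, ⟨_, _, _, _, rfl⟩⟩) (by
    constructor
    · rintro ⟨a, x, y, z⟩ ⟨a', x', y', z'⟩ h
      have := congrArg (fun g : U F => ((g : symplecticGroup (Fin 2) F) : Matrix (Fin 2 ⊕ Fin 2) (Fin 2 ⊕ Fin 2) F)) h
      simpa [um_inj] using this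
    · rintro ⟨⟨g, hg⟩, a, x, y, z, h⟩
      exact ⟨(a, x, y, z), Subtype.ext (Subtype.ext h.symm)⟩)

lemma uEquiv_coe (a x y z : F) :
    (((uEquiv F (a, x, y, z) : U F) : symplecticGroup (Fin 2) F) :
      Matrix (Fin 2 ⊕ Fin 2) (Fin 2 ⊕ Fin 2) F) = um a x y z := rfl

lemma commute_iff (s t : F × F × F × F) : Commute (uEquiv F s) (uEquiv F t) ↔
    s.1 * t.2.2.2 = t.1 * s.2.2.2 ∧
    2 * s.1 * t.2.2.1 + s.1 ^ 2 * t.2.2.2 = 2 * t.1 * s.2.2.1 + t.1 ^ 2 * s.2.2.2 := by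
  obtain ⟨a, x, y, z⟩ := s
  obtain ⟨a', x', y', z'⟩ := t
  rw [Commute, SemiconjBy, ← Subtype.coe_inj, ← Subtype.coe_inj]
  simp only [uEquiv_coe, Subgroup.coe_mul, Submonoid.coe_mul, um_mul, um_inj]
  constructor
  · rintro ⟨-, h1, h2, -⟩
    exact ⟨by linear_combination h2, by linear_combination h1⟩
  · rintro ⟨h2, h1⟩
    exact ⟨by ring, by linear_combination h1, by linear_combination h2, by ring⟩

/-- parametrization of commuting pairs -/
def par : (Fˣ × F × F × F × F × F) ⊕ (F × F × F × F × F × F) ⊕ (Fˣ × F × F × F × F) →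
    (F × F × F × F) × (F × F × F × F)
  | .inl (a, x, y, z, b, w) =>
    (((a : F), x, y, z), (b, w,
      (2 * b * y + b ^ 2 * z - a * (b * z)) / (2 * a), b * z / a))
  | .inr (.inl (x, y, z, x', y', z')) => ((0, x, y, z), (0, x', y', z'))
  | .inr (.inr (b, x, x', y', z')) => ((0, x, 0, 0), ((b : F), x', y', z'))

lemma par_inj : Function.Injective (par (F := F)) := by
  rintro (⟨a, x, y, z, b, w⟩ | ⟨x, y, z, x', y', z'⟩ | ⟨b, x, x', y', z'⟩)
    (⟨c, x1, y1, z1, b1, w1⟩ | ⟨x1, y1, z1, x1', y1', z1'⟩ | ⟨b1, x1, x1', y1', z1'⟩) h <;>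
    simp [par] at h ⊢ <;> simp_all [Units.ext_iff, eq_comm]

lemma par_range (h2 : (2 : F) ≠ 0) (s t : F × F × F × F) : (s, t) ∈ Set.range (par (F := F)) ↔
    s.1 * t.2.2.2 = t.1 * s.2.2.2 ∧
    2 * s.1 * t.2.2.1 + s.1 ^ 2 * t.2.2.2 = 2 * t.1 * s.2.2.1 + t.1 ^ 2 * s.2.2.2 := by
  constructor
  · rintro ⟨(⟨a, x, y, z, b, w⟩ | ⟨x, y, z, x', y', z'⟩ | ⟨b, x, x', y', z'⟩), h⟩ <;>
      simp only [par, Prod.mk.injEq] at h <;> obtain ⟨rfl, rfl⟩ := h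
    · have := a.ne_zero
      constructor
      · field_simp
      · field_simp
        ring
    · simp
    · simp
  · obtain ⟨a, x, y, z⟩ := s
    obtain ⟨b, x', y', z'⟩ := t
    rintro ⟨h, h'⟩
    simp only at h h'
    by_cases ha : a = 0
    · subst ha
      by_cases hb : b = 0
      · subst hb
        exact ⟨.inr (.inl (x, y, z, x', y', z')), rfl⟩
      · have hz : z = 0 := by simpa [hb] using h
        subst hz
        have hy : y = 0 := by simpa [hb, h2] using h'
        subst hy
        exact ⟨.inr (.inr (Units.mk0 b hb, x, x', y', z')), rfl⟩
    · refine ⟨.inl (Units.mk0 a ha, x, y, z, b, x'), ?_⟩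
      simp only [par, Units.val_mk0, Prod.mk.injEq, true_and]
      constructor
      · rw [div_eq_iff (by simp [h2, ha])]
        linear_combination -h' + a * h
      · rw [div_eq_iff ha]
        linear_combination -h

lemma card_commute [Fintype F] (h2 : (2 : F) ≠ 0) :
    Nat.card {p : U F × U F // Commute p.1 p.2} =
      (Fintype.card F - 1) * Fintype.card F ^ 5 + (Fintype.card F ^ 6
        + (Fintype.card F - 1) * Fintype.card F ^ 4) := by
  classical
  have e1 : {p : U F × U F // Commute p.1 p.2} ≃ Set.range (par (F := F)) := by
    refine ((Equiv.prodCongr (uEquiv F) (uEquiv F)).subtypeEquiv ?_).symm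
    rintro ⟨s, t⟩
    rw [par_range h2]
    exact (commute_iff s t).symm
  rw [Nat.card_congr e1, Nat.card_congr (Equiv.ofInjective _ par_inj).symm]
  simp only [Nat.card_eq_fintype_card, Fintype.card_sum, Fintype.card_prod, Fintype.card_units]
  ring

lemma card_U [Fintype F] : Nat.card (U F) = Fintype.card F ^ 4 := by
  rw [← Nat.card_congr (uEquiv F)]
  simp only [Nat.card_eq_fintype_card, Fintype.card_prod]
  ring

lemma card_conj [Fintype F] (h2 : (2 : F) ≠ 0) :
    Nat.card (ConjClasses (U F)) = 2 * (Fintype.card F - 1) ^ 2 + 4 * (Fintype.card F - 1) + 1 := by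
  have h := card_comm_eq_card_conjClasses_mul_card (U F)
  rw [card_commute h2, card_U] at h
  obtain ⟨v, hv⟩ : ∃ v, Fintype.card F = v + 1 := ⟨Fintype.card F - 1, by
    have := Fintype.card_pos (α := F); omega⟩
  rw [hv] at h ⊢
  simp only [Nat.add_sub_cancel] at h ⊢
  have hpos : 0 < (v + 1) ^ 4 := by positivity
  apply Nat.eq_of_mul_eq_mul_right hpos
  rw [← h]
  ring

def Tri (g : Matrix (Fin 2 ⊕ Fin 2) (Fin 2 ⊕ Fin 2) F) : Prop :=
  g (.inl 1) (.inl 0) = 0 ∧ g (.inr 0) (.inl 0) = 0 ∧ g (.inr 1) (.inl 0) = 0 ∧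
  g (.inr 0) (.inl 1) = 0 ∧ g (.inr 1) (.inl 1) = 0 ∧ g (.inr 0) (.inr 1) = 0

lemma tri_pow {g : Matrix (Fin 2 ⊕ Fin 2) (Fin 2 ⊕ Fin 2) F} (hg : Tri g) (k : ℕ) :
    Tri (g ^ k) ∧ ∀ i, (g ^ k) i i = g i i ^ k := by
  induction k with
  | zero => simp [Tri]
  | succ k ih =>
    obtain ⟨⟨h1, h2, h3, h4, h5, h6⟩, hd⟩ := ih
    obtain ⟨g1, g2, g3, g4, g5, g6⟩ := hg
    refine ⟨?_, ?_⟩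
    · refine ⟨?_, ?_, ?_, ?_, ?_, ?_⟩ <;> rw [pow_succ, Matrix.mul_apply] <;>
        simp [Fintype.sum_sum_type, *]
    · rintro (i | i) <;> fin_cases i <;> rw [pow_succ, Matrix.mul_apply] <;>
        simp [Fintype.sum_sum_type, *, pow_succ]

lemma mem_U_of_tri {g : symplecticGroup (Fin 2) F} (hg : Tri (g : Matrix (Fin 2 ⊕ Fin 2) (Fin 2 ⊕ Fin 2) F))
    (hd : ∀ i, (g : Matrix (Fin 2 ⊕ Fin 2) (Fin 2 ⊕ Fin 2) F) i i = 1) : g ∈ U F := by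
  obtain ⟨g, hs⟩ := g
  simp only at hg hd
  obtain ⟨g1, g2, g3, g4, g5, g6⟩ := hg
  rw [SymplecticGroup.mem_iff] at hs
  have E := fun i j => congrFun (congrFun hs i) j
  have d1 := hd (.inl 0)
  have d2 := hd (.inl 1)
  have d3 := hd (.inr 0)
  have d4 := hd (.inr 1)
  have e1 := E (.inl 0) (.inr 1)
  have e2 := E (.inl 0) (.inl 1)
  simp [Matrix.mul_apply, Fintype.sum_sum_type, J, g1, g2, g3, g4, g5, g6, d1, d2, d3, d4] at e1 e2
  refine ⟨g (.inl 0) (.inl 1), g (.inl 0) (.inr 0) + g (.inl 0) (.inl 1) * g (.inl 0) (.inr 1),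
    g (.inl 0) (.inr 1), g (.inl 1) (.inr 1), ?_⟩
  ext (i | i) (j | j) <;> fin_cases i <;> fin_cases j <;>
    simp [um, g1, g2, g3, g4, g5, g6, d1, d2, d3, d4]
  · linear_combination -e2
  · linear_combination -e1

lemma tri_of_normalizer {g : symplecticGroup (Fin 2) F}
    (hg : ∀ u ∈ U F, g⁻¹ * u * g ∈ U F) : Tri (g : Matrix (Fin 2 ⊕ Fin 2) (Fin 2 ⊕ Fin 2) F) := by
  have key : ∀ a x y z : F, ∃ a' x' y' z' : F,
      um a x y z * (g : Matrix (Fin 2 ⊕ Fin 2) (Fin 2 ⊕ Fin 2) F) = (g : Matrix (Fin 2 ⊕ Fin 2) (Fin 2 ⊕ Fin 2) F) * um a' x' y' z' := by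
    intro a x y z
    obtain ⟨a', x', y', z', h⟩ := hg ⟨um a x y z, um_mem _ _ _ _⟩ ⟨_, _, _, _, rfl⟩
    refine ⟨a', x', y', z', ?_⟩
    rw [← h, ← Submonoid.coe_mul]
    simp [mul_assoc]
  obtain ⟨g, hs⟩ := g
  simp only at key
  obtain ⟨a1, x1, y1, z1, k1⟩ := key 1 0 0 0
  obtain ⟨a2, x2, y2, z2, k2⟩ := key 0 0 1 0
  obtain ⟨a3, x3, y3, z3, k3⟩ := key 0 0 0 1
  obtain ⟨a4, x4, y4, z4, k4⟩ := key 0 1 0 0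
  have E1 := fun i j => congrFun (congrFun k1 i) j
  have E2 := fun i j => congrFun (congrFun k2 i) j
  have E3 := fun i j => congrFun (congrFun k3 i) j
  have E4 := fun i j => congrFun (congrFun k4 i) j
  simp only [Matrix.mul_apply, Fintype.sum_sum_type, Fin.sum_univ_two] at E1 E2 E3 E4
  have g1 : g (.inl 1) (.inl 0) = 0 := by
    have := E1 (.inl 0) (.inl 0)
    have h2 := E1 (.inr 1) (.inl 0)
    simp [um] at this h2
    simpa [h2] using this
  have g2 : g (.inr 0) (.inl 0) = 0 := by
    have := E1 (.inr 1) (.inl 0)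
    simpa [um] using this
  have g3 : g (.inr 1) (.inl 0) = 0 := by
    have := E2 (.inl 0) (.inl 0)
    simpa [um] using this
  have g4 : g (.inr 0) (.inl 1) = 0 := by
    have := E1 (.inr 1) (.inl 1)
    simpa [um, g3] using this
  have g5 : g (.inr 1) (.inl 1) = 0 := by
    have := E3 (.inl 1) (.inl 1)
    simpa [um, g1] using this
  have g6 : g (.inr 0) (.inr 1) = 0 := by
    have := E1 (.inr 1) (.inr 1)
    simpa [um, g3, g5] using this
  exact ⟨g1, g2, g3, g4, g5, g6⟩

lemma mem_U_of_normalizer {p k : ℕ} [Fact p.Prime] [CharP F p] {g : symplecticGroup (Fin 2) F}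
    (hg : ∀ u ∈ U F, g⁻¹ * u * g ∈ U F) (hk : g ^ p ^ k = 1) : g ∈ U F := by
  have ht := tri_of_normalizer hg
  refine mem_U_of_tri ht fun i => ?_
  have h := (tri_pow ht (p ^ k)).2 i
  have h1 : (g : Matrix (Fin 2 ⊕ Fin 2) (Fin 2 ⊕ Fin 2) F) ^ p ^ k = 1 := by
    rw [← SubmonoidClass.coe_pow, hk, Submonoid.coe_one]
  rw [h1, Matrix.one_apply_eq] at h
  have : iterateFrobenius F p k ((g : Matrix (Fin 2 ⊕ Fin 2) (Fin 2 ⊕ Fin 2) F) i i) = iterateFrobenius F p k 1 := by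
    rw [iterateFrobenius_def, iterateFrobenius_def, one_pow, h]
  exact (iterateFrobenius F p k).injective this

lemma U_sylow {p n : ℕ} [Fact p.Prime] [Fintype F] [CharP F p] (hc : Fintype.card F = p ^ n) :
    ∃ Q : Sylow p (symplecticGroup (Fin 2) F), (Q : Subgroup _) = U F := by
  classical
  have hU : IsPGroup p (U F) := IsPGroup.of_card (n := n * 4) (by rw [card_U, hc, pow_mul])
  obtain ⟨Q, hQ⟩ := hU.exists_le_sylow
  refine ⟨Q, le_antisymm ?_ hQ⟩
  by_contra hne
  have : Group.IsNilpotent Q := Q.isPGroup'.isNilpotent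
  have hN := Group.normalizerCondition_of_isNilpotent (G := Q) ((U F).subgroupOf Q) (by
    rw [lt_top_iff_ne_top, Ne, Subgroup.subgroupOf_eq_top]
    exact hne)
  obtain ⟨g, hg, hgn⟩ := SetLike.exists_of_lt hN
  apply hgn
  rw [Subgroup.mem_subgroupOf]
  obtain ⟨k, hk⟩ := Q.isPGroup' g
  refine mem_U_of_normalizer (p := p) (k := k) (fun u hu => ?_) (by
    rw [← Subgroup.coe_pow, hk, Subgroup.coe_one])
  have := (Subgroup.mem_normalizer_iff''.1 hg ⟨u, hQ hu⟩).1 (by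
    rw [Subgroup.mem_subgroupOf]; exact hu)
  simpa [Subgroup.mem_subgroupOf] using this

end SpFour

theorem card_conjClasses_sylow_sp4 (p q : ℕ) (hp : p.Prime) (hodd : Odd p)
    (hq : ∃ n : ℕ, 0 < n ∧ q = p ^ n)
    (F : Type*) [Field F] [Fintype F] (hF : Fintype.card F = q)
    (P : Sylow p (Matrix.symplecticGroup (Fin 2) F)) (v : ℕ) (hv : v = q - 1) :
    Nat.card (ConjClasses (P : Subgroup (Matrix.symplecticGroup (Fin 2) F))) =
      2 * v ^ 2 + 4 * v + 1 := by
  classical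
  have : Fact p.Prime := ⟨hp⟩
  obtain ⟨n, hn, rfl⟩ := hq
  have hch : CharP F p := charP_of_card_eq_prime_pow hF
  have h2 : (2 : F) ≠ 0 := by
    apply Ring.two_ne_zero
    rw [ringChar.eq F p]
    rintro rfl
    exact absurd hodd (by decide)
  obtain ⟨Q, hQ⟩ := SpFour.U_sylow (F := F) hF
  have e : P ≃* SpFour.U F := (P.equiv Q).trans (MulEquiv.subgroupCongr hQ)
  have h := SpFour.card_conj (F := F) h2
  rw [hF, ← hv] at h
  rw [← h]
  refine Nat.card_congr ⟨ConjClasses.map e.toMonoidHom, ConjClasses.map e.symm.toMonoidHom, ?_, ?_⟩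
  · intro c
    obtain ⟨c, rfl⟩ := ConjClasses.mk_surjective c
    exact congrArg ConjClasses.mk (e.symm_apply_apply c)
  · intro c
    obtain ⟨c, rfl⟩ := ConjClasses.mk_surjective c
    exact congrArg ConjClasses.mk (e.apply_symm_apply c)
end

section
/- Let p be an odd prime, q a power of p, and let P be a Sylow p-subgroup of the symplectic group Sp_6(F_q). Then the number of conjugacy classes of P equals v⁴ + 8v³ + 16v² + 9v + 1, where v = q − 1. -/
namespace Sp6

set_option linter.unusedSectionVars false

section Count
variable {F : Type*} [Field F]

def Fx (a b c d e : F) (h : F × F × F) : Prop :=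
  h.1 * a = 0 ∧ h.1 * b = 0 ∧ h.2.1 * b + 2 * h.2.2 * a = 0 ∧
    2 * h.1 * c + 2 * h.2.1 * d + h.2.2 * b = 0 ∧ h.2.1 * e + h.2.2 * c = 0

def Cm (w : (F × F × F) × (F × F × F)) : Prop := w.1.1 * w.2.2.1 = w.2.1 * w.1.2.1

noncomputable def nn (a b c d e : F) : ℕ :=
  Nat.card {w : (F × F × F) × (F × F × F) // Fx a b c d e w.1 ∧ Fx a b c d e w.2 ∧ Cm w}

variable [Fintype F] [DecidableEq F]

lemma nn_one {a b c d e : F} (h0 : ∀ h, Fx a b c d e h → h = 0) : nn a b c d e = 1 := by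
  rw [nn, Nat.card_eq_one_iff_unique]
  refine ⟨⟨fun u w => ?_⟩, ⟨⟨(0, 0), by simp [Fx, Cm]⟩⟩⟩
  ext1
  exact Prod.ext ((h0 _ u.2.1).trans (h0 _ w.2.1).symm) ((h0 _ u.2.2.1).trans (h0 _ w.2.2.1).symm)

lemma nn_line {a b c d e r s : F} (h0 : ∀ h, Fx a b c d e h ↔ h.1 = r * h.2.1 ∧ h.2.2 = s * h.2.1) :
    nn a b c d e = Fintype.card F ^ 2 := by
  have : Nat.card (F × F) = Fintype.card F ^ 2 := by
    rw [Nat.card_eq_fintype_card, Fintype.card_prod, sq]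
  rw [nn, ← this]
  refine Nat.card_congr ⟨fun w => (w.1.1.2.1, w.1.2.2.1),
    fun u => ⟨((r * u.1, u.1, s * u.1), (r * u.2, u.2, s * u.2)), ?_, ?_, ?_⟩, ?_, ?_⟩
  · simp [h0]
  · simp [h0]
  · simp only [Cm]; ring
  · rintro ⟨⟨⟨x, y, z⟩, ⟨x', y', z'⟩⟩, h1, h2, h3⟩
    simp only [h0] at h1 h2
    simp [h1.1, h1.2, h2.1, h2.2]
  · rintro ⟨u, v⟩; rfl

lemma nn_plane {a b c d e : F} (h0 : ∀ h, Fx a b c d e h ↔ h.2.1 = 0) :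
    nn a b c d e = Fintype.card F ^ 4 := by
  have : Nat.card ((F × F) × (F × F)) = Fintype.card F ^ 4 := by
    rw [Nat.card_eq_fintype_card, Fintype.card_prod, Fintype.card_prod]; ring
  rw [nn, ← this]
  refine Nat.card_congr ⟨fun w => ((w.1.1.1, w.1.1.2.2), (w.1.2.1, w.1.2.2.2)),
    fun u => ⟨((u.1.1, 0, u.1.2), (u.2.1, 0, u.2.2)), ?_, ?_, ?_⟩, ?_, ?_⟩
  · simp [h0]
  · simp [h0]
  · simp [Cm]
  · rintro ⟨⟨⟨x, y, z⟩, ⟨x', y', z'⟩⟩, h1, h2, h3⟩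
    simp only [h0] at h1 h2
    simp [h1, h2]
  · rintro ⟨u, v⟩; rfl

lemma card_lin (x y : F) : (Nat.card {u : F × F // x * u.2 = u.1 * y} : ℤ) =
    (Fintype.card F : ℤ) + if x = 0 then (if y = 0 then (Fintype.card F : ℤ) ^ 2 - Fintype.card F else 0) else 0 := by
  have key : ¬ (x = 0 ∧ y = 0) → Nat.card {u : F × F // x * u.2 = u.1 * y} = Fintype.card F := by
    intro h
    rw [← Nat.card_eq_fintype_card]
    by_cases hx : x = 0
    · have hy : y ≠ 0 := fun hy => h ⟨hx, hy⟩
      refine Nat.card_congr ⟨fun u => u.1.2, fun t => ⟨(0, t), by simp [hx]⟩, ?_, fun t => rfl⟩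
      rintro ⟨⟨u, v⟩, huv⟩
      simp [hx, hy] at huv
      simp [huv]
    · refine Nat.card_congr ⟨fun u => u.1.1, fun t => ⟨(t, t * y / x), by field_simp⟩, ?_, fun t => rfl⟩
      rintro ⟨⟨u, v⟩, huv⟩
      simp at huv
      simp [← huv, hx]
  by_cases h : x = 0 ∧ y = 0
  · obtain ⟨rfl, rfl⟩ := h
    simp [sq]
  · rw [key h]
    by_cases hx : x = 0 <;> by_cases hy : y = 0 <;> simp_all

lemma nn_zero : (nn (0 : F) 0 0 0 0 : ℤ) =
    (Fintype.card F : ℤ) ^ 3 * ((Fintype.card F : ℤ) ^ 2 + Fintype.card F - 1) := by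
  have e : {w : (F × F × F) × (F × F × F) // Fx (0:F) 0 0 0 0 w.1 ∧ Fx (0:F) 0 0 0 0 w.2 ∧ Cm w} ≃
      (F × F) × (Σ xy : F × F, {u : F × F // xy.1 * u.2 = u.1 * xy.2}) :=
    ⟨fun w => ((w.1.1.2.2, w.1.2.2.2), ⟨(w.1.1.1, w.1.1.2.1), ⟨(w.1.2.1, w.1.2.2.1), w.2.2.2⟩⟩),
     fun u => ⟨((u.2.1.1, u.2.1.2, u.1.1), (u.2.2.1.1, u.2.2.1.2, u.1.2)),
       by simp [Fx], by simp [Fx], u.2.2.2⟩, fun w => rfl, fun u => rfl⟩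
  rw [nn, Nat.card_congr e, Nat.card_prod, Nat.card_sigma, Fintype.sum_prod_type]
  push_cast
  simp_rw [card_lin]
  simp [Finset.sum_add_distrib]
  ring

lemma sum_nn (h2 : (2 : F) ≠ 0) :
    (∑ a : F, ∑ b : F, ∑ c : F, ∑ d : F, ∑ e : F, (nn a b c d e : ℤ)) =
     (Fintype.card F : ℤ) ^ 2 * ((Fintype.card F : ℤ)^4 + (Fintype.card F : ℤ)^3 - Fintype.card F + 
      ((Fintype.card F : ℤ) - 1) * (3 * (Fintype.card F : ℤ)^2 + Fintype.card F - 1)) := by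
  have key : ∀ a b c d e : F, (nn a b c d e : ℤ) =
      if a = 0 then if b = 0 then if c = 0 then 
        (Fintype.card F : ℤ) ^ 4 + (if d = 0 then if e = 0 then (Fintype.card F : ℤ) ^ 3 * ((Fintype.card F : ℤ) ^ 2 + Fintype.card F - 1) - (Fintype.card F : ℤ) ^ 4 else 0 else 0)
        else (Fintype.card F : ℤ) ^ 2 else 1
      else 1 + (if d = b ^ 2 / (4 * a) then if e = b * c / (2 * a) then (Fintype.card F : ℤ) ^ 2 - 1 else 0 else 0) := by
    intro a b c d e
    have h4 : (4 : F) ≠ 0 := by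
      have : (4 : F) = 2 * 2 := by norm_num
      rw [this]; exact mul_ne_zero h2 h2
    by_cases ha : a = 0
    · subst ha
      by_cases hb : b = 0
      · subst hb
        by_cases hc : c = 0
        · subst hc
          by_cases hd : d = 0
          · subst hd
            by_cases he : e = 0
            · subst he
              simp [nn_zero]
            · rw [nn_plane]
              · simp [he]
              · rintro ⟨x, y, z⟩; simp [Fx, he]
          · rw [nn_plane]
            · simp [hd]
            · rintro ⟨x, y, z⟩; simp [Fx, hd, h2]; intro h; simp [h]
        · rw [nn_line (r := - d / c) (s := - e / c)]
          · simp [hc]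
          · rintro ⟨x, y, z⟩
            simp only [Fx, mul_zero, add_zero, true_and]
            constructor
            · rintro ⟨h, h'⟩
              constructor
              · field_simp
                apply mul_left_cancel₀ h2
                linear_combination h
              · field_simp
                linear_combination h'
            · rintro ⟨rfl, rfl⟩
              constructor <;> field_simp <;> ring
      · rw [nn_one]
        · simp [hb]
        · rintro ⟨x, y, z⟩ h
          simp [Fx, hb] at h
          obtain ⟨rfl, rfl, h, -⟩ := h
          simp [hb] at h
          simp [h]
    · by_cases hde : d = b ^ 2 / (4 * a) ∧ e = b * c / (2 * a)
      · rw [nn_line (r := 0) (s := - b / (2 * a))]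
        · simp [ha, hde.1, hde.2]
        · obtain ⟨rfl, rfl⟩ := hde
          rintro ⟨x, y, z⟩
          simp only [Fx, mul_eq_zero, ha, or_false, zero_mul]
          constructor
          · rintro ⟨rfl, -, h, -⟩
            refine ⟨rfl, ?_⟩
            field_simp
            linear_combination h
          · rintro ⟨rfl, rfl⟩
            refine ⟨rfl, Or.inl rfl, ?_, ?_, ?_⟩ <;> field_simp <;> ring
      · rw [nn_one]
        · simp only [ha, if_false]
          by_cases hd : d = b ^ 2 / (4 * a)
          · have he : e ≠ b * c / (2 * a) := fun he => hde ⟨hd, he⟩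
            simp [he]
          · simp [hd]
        · rintro ⟨x, y, z⟩ h
          simp only [Fx, mul_eq_zero, ha, or_false] at h
          obtain ⟨rfl, -, h3, h4', h5⟩ := h
          have hy : y = 0 := by
            by_contra hy
            apply hde
            constructor
            · field_simp
              apply mul_left_cancel₀ hy
              linear_combination 2 * a * h4' - b * h3
            · field_simp
              apply mul_left_cancel₀ hy
              linear_combination 2 * a * h5 - c * h3
          subst hy
          have hz : z = 0 := by simpa [ha, h2] using h3
          simp [hz]
  simp_rw [key]
  have s0 : ∀ X Y : ℤ, (∑ a : F, if a = 0 then X else Y) = X + (Fintype.card F - 1) * Y := by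
    intro X Y
    have : ∀ a : F, (if a = 0 then X else Y) = (if a = 0 then X - Y else 0) + Y := by
      intro a; split_ifs <;> ring
    simp_rw [this, Finset.sum_add_distrib]
    simp
    ring
  have push : ∀ (P : Prop) [Decidable P] (f g : F → ℤ), (∑ x, if P then f x else g x) = if P then ∑ x, f x else ∑ x, g x := by
    intro P _ f g; split_ifs <;> rfl
  simp only [push, s0, Finset.sum_add_distrib, Finset.sum_const, Finset.sum_ite_eq', Finset.mem_univ, if_true, Finset.card_univ, nsmul_eq_mul, mul_zero, mul_one]
  ring

end Count

section Dual
variable {F : Type*} [Field F] [Fintype F]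

lemma card_ker_dual {V W : Type*} [AddCommGroup V] [Module F V] [Finite V] [AddCommGroup W] [Module F W] [Finite W]
    (f : V →ₗ[F] W) :
    Nat.card (LinearMap.ker f) * Nat.card W =
      Nat.card V * Nat.card {l : Module.Dual F W // l ∘ₗ f = 0} := by
  have e : Nat.card {l : Module.Dual F W // l ∘ₗ f = 0} =
      Nat.card (LinearMap.range f).dualAnnihilator := by
    refine Nat.card_congr (Equiv.subtypeEquivRight fun l => ?_)
    rw [Submodule.mem_dualAnnihilator]
    constructor
    · rintro h _ ⟨v, rfl⟩
      exact LinearMap.congr_fun h v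
    · intro h
      ext v
      exact h _ ⟨v, rfl⟩
  rw [e]
  have h1 := LinearMap.finrank_range_add_finrank_ker f
  have h2 := Subspace.finrank_add_finrank_dualAnnihilator_eq (LinearMap.range f)
  rw [Module.natCard_eq_pow_finrank (K := F) (V := LinearMap.ker f), Module.natCard_eq_pow_finrank (K := F) (V := V),
    Module.natCard_eq_pow_finrank (K := F) (V := W),
    Module.natCard_eq_pow_finrank (K := F) (V := (LinearMap.range f).dualAnnihilator), ← pow_add, ← pow_add]
  congr 1
  omega

lemma card_pair_dual {V : Type*} [AddCommGroup V] [Module F V] [Finite V] (α β : V →ₗ[F] V) :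
    Nat.card {s : V × V // α s.2 = β s.1} =
      Nat.card V * Nat.card {l : Module.Dual F V // l ∘ₗ α = 0 ∧ l ∘ₗ β = 0} := by
  have h := card_ker_dual (α ∘ₗ LinearMap.snd F V V - β ∘ₗ LinearMap.fst F V V)
  have h1 : Nat.card {s : V × V // α s.2 = β s.1} =
      Nat.card (LinearMap.ker (α ∘ₗ LinearMap.snd F V V - β ∘ₗ LinearMap.fst F V V)) := by
    refine Nat.card_congr (Equiv.subtypeEquivRight fun l => ?_)
    simp [sub_eq_zero]
  have h2 : Nat.card {l : Module.Dual F V // l ∘ₗ α = 0 ∧ l ∘ₗ β = 0} =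
      Nat.card {l : Module.Dual F V // l ∘ₗ (α ∘ₗ LinearMap.snd F V V - β ∘ₗ LinearMap.fst F V V) = 0} := by
    refine Nat.card_congr (Equiv.subtypeEquivRight fun l => ?_)
    constructor
    · rintro ⟨ha, hb⟩
      rw [LinearMap.comp_sub, ← LinearMap.comp_assoc, ← LinearMap.comp_assoc, ha, hb]
      simp
    · intro h
      constructor
      · ext v
        simpa using LinearMap.congr_fun h (0, v)
      · ext v
        simpa using LinearMap.congr_fun h (v, 0)
  rw [h1, h2]
  rw [Nat.card_prod] at h
  have : 0 < Nat.card V := Nat.card_pos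
  apply Nat.eq_of_mul_eq_mul_right this
  rw [h]; ring

end Dual

section Act
variable {F : Type*} [Field F]
open Matrix

def mA (h : F × F × F) : Matrix (Fin 3) (Fin 3) F :=
  !![1, 2 * h.1, h.2.2 + h.1 * h.2.1; 0, 1, h.2.1; 0, 0, 1]

def mS (s : Fin 6 → F) : Matrix (Fin 3) (Fin 3) F :=
  !![s 0, s 1, s 2; s 1, s 3, s 4; s 2, s 4, s 5]

def vec (M : Matrix (Fin 3) (Fin 3) F) : Fin 6 → F :=
  ![M 0 0, M 0 1, M 0 2, M 1 1, M 1 2, M 2 2]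

lemma vec_mS (s : Fin 6 → F) : vec (mS s) = s := by
  ext i; fin_cases i <;> simp [vec, mS]

lemma mS_vec {M : Matrix (Fin 3) (Fin 3) F} (h : Mᵀ = M) : mS (vec M) = M := by
  have h' : ∀ i j, M i j = M j i := fun i j => congrFun₂ h j i
  ext i j; fin_cases i <;> fin_cases j <;> simp [vec, mS, h' 1 0, h' 2 0, h' 2 1]

lemma mS_symm (s : Fin 6 → F) : (mS s)ᵀ = mS s := by
  ext i j; fin_cases i <;> fin_cases j <;> simp [mS]

lemma vec_sub (M N : Matrix (Fin 3) (Fin 3) F) : vec (M - N) = vec M - vec N := by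
  ext i; fin_cases i <;> rfl

lemma vec_add (M N : Matrix (Fin 3) (Fin 3) F) : vec (M + N) = vec M + vec N := by
  ext i; fin_cases i <;> rfl

lemma vec_smul (r : F) (M : Matrix (Fin 3) (Fin 3) F) : vec (r • M) = r • vec M := by
  ext i; fin_cases i <;> rfl

lemma mS_add (s t : Fin 6 → F) : mS (s + t) = mS s + mS t := by
  ext i j; fin_cases i <;> fin_cases j <;> rfl

lemma mS_smul (r : F) (t : Fin 6 → F) : mS (r • t) = r • mS t := by
  ext i j; fin_cases i <;> fin_cases j <;> rfl

def act (h : F × F × F) : (Fin 6 → F) →ₗ[F] (Fin 6 → F) where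
  toFun s := vec (mA h * mS s * (mA h)ᵀ - mS s)
  map_add' s t := by
    rw [← vec_add, mS_add, Matrix.mul_add, Matrix.add_mul]
    congr 1
    abel
  map_smul' r s := by
    rw [mS_smul, RingHom.id_apply, ← vec_smul, smul_sub, Matrix.mul_smul, Matrix.smul_mul]

lemma act_dot (t s : Fin 6 → F) (x y z : F) :
    ((dotProductEquiv F (Fin 6) t) ∘ₗ act (x, y, z)) s =
      s 1 * (4 * x * t 0) + s 2 * (2 * (z + x * y) * t 0 + y * t 1) +
      s 3 * (4 * x ^ 2 * t 0 + 2 * x * t 1) +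
      s 4 * (4 * x * (z + x * y) * t 0 + (3 * x * y + z) * t 1 + 2 * x * t 2 + 2 * y * t 3) +
      s 5 * ((z + x * y) ^ 2 * t 0 + (x * y ^ 2 + z * y) * t 1 + (x * y + z) * t 2 + y ^ 2 * t 3
        + y * t 4) := by
  change t ⬝ᵥ vec (mA (x,y,z) * mS s * (mA (x,y,z))ᵀ - mS s) = _
  simp only [vec, mS, mA, Matrix.sub_apply, Matrix.mul_apply, Matrix.transpose_apply,
    Fin.sum_univ_three, dotProduct, Fin.sum_univ_six]
  simp
  ring

lemma dual_iff (h2 : (2 : F) ≠ 0) (t : Fin 6 → F) (h : F × F × F) :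
    (dotProductEquiv F (Fin 6) t) ∘ₗ act h = 0 ↔ Fx (t 0) (t 1) (t 2) (t 3) (t 4) h := by
  obtain ⟨x, y, z⟩ := h
  constructor
  · intro H
    have H' := fun s => (act_dot t s x y z).symm.trans (LinearMap.congr_fun H s)
    have K1 := H' ![0,1,0,0,0,0]
    have K2 := H' ![0,0,1,0,0,0]
    have K3 := H' ![0,0,0,1,0,0]
    have K4 := H' ![0,0,0,0,1,0]
    have K5 := H' ![0,0,0,0,0,1]
    clear H' H
    simp only [Matrix.cons_val, zero_mul, one_mul, zero_add, add_zero, LinearMap.zero_apply]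
      at K1 K2 K3 K4 K5
    have c2 : ∀ u : F, 2 * u = 0 → u = 0 := fun u hu => (mul_eq_zero.1 hu).resolve_left h2
    have H1 : x * t 0 = 0 := c2 _ (c2 _ (by linear_combination K1))
    have H2 : x * t 1 = 0 := c2 _ (by linear_combination K3 - 4 * x * H1)
    have H3 : y * t 1 + 2 * z * t 0 = 0 := by linear_combination K2 - 2 * y * H1
    have H4 : 2 * x * t 2 + 2 * y * t 3 + z * t 1 = 0 := by
      linear_combination K4 - 4 * (z + x * y) * H1 - 3 * y * H2
    refine ⟨H1, H2, H3, H4, c2 _ ?_⟩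
    linear_combination 2 * K5 - y * H4 - z * H3 - 2 * (2 * z * y + x * y ^ 2) * H1 - 2 * y ^ 2 * H2
  · rintro ⟨H1, H2, H3, H4, H5⟩
    simp only at H1 H2 H3 H4 H5
    refine LinearMap.ext fun s => ?_
    rw [act_dot, LinearMap.zero_apply]
    apply mul_left_cancel₀ h2
    linear_combination 2 * s 1 * 4 * H1 + 2 * s 2 * (H3 + 2 * y * H1) + 2 * s 3 * (4 * x * H1 + 2 * H2)
      + 2 * s 4 * (H4 + 4 * (z + x * y) * H1 + 3 * y * H2)
      + s 5 * (2 * H5 + y * H4 + z * H3 + 2 * (2 * z * y + x * y ^ 2) * H1 + 2 * y ^ 2 * H2)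

lemma act_eq_iff (h h' : F × F × F) (s s' : Fin 6 → F) :
    act h s' = act h' s ↔ mA h * mS s' * (mA h)ᵀ + mS s = mA h' * mS s * (mA h')ᵀ + mS s' := by
  change vec (mA h * mS s' * (mA h)ᵀ - mS s') = vec (mA h' * mS s * (mA h')ᵀ - mS s) ↔ _
  constructor
  · intro H
    have := congrArg mS H
    rw [mS_vec, mS_vec] at this
    · rw [sub_eq_sub_iff_add_eq_add] at this
      exact this
    · simp [Matrix.transpose_mul, mS_symm, Matrix.mul_assoc]
    · simp [Matrix.transpose_mul, mS_symm, Matrix.mul_assoc]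
  · intro H
    rw [sub_eq_sub_iff_add_eq_add.2 H]

variable [Fintype F]

/-- Parameters of commuting pairs. -/
def CP (w : ((F × F × F) × (F × F × F)) × ((Fin 6 → F) × (Fin 6 → F))) : Prop :=
  Cm w.1 ∧ act w.1.1 w.2.2 = act w.1.2 w.2.1

lemma card_CP (h2 : (2 : F) ≠ 0) :
    (Nat.card {w : ((F × F × F) × (F × F × F)) × ((Fin 6 → F) × (Fin 6 → F)) // CP w} : ℤ) =
     (Fintype.card F : ℤ) ^ 9 * ((Fintype.card F : ℤ)^4 + (Fintype.card F : ℤ)^3 - Fintype.card F + 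
      ((Fintype.card F : ℤ) - 1) * (3 * (Fintype.card F : ℤ)^2 + Fintype.card F - 1)) := by
  classical
  have e1 : {w : ((F × F × F) × (F × F × F)) × ((Fin 6 → F) × (Fin 6 → F)) // CP w} ≃
      Σ h : {h : (F × F × F) × (F × F × F) // Cm h},
        {s : (Fin 6 → F) × (Fin 6 → F) // act h.1.1 s.2 = act h.1.2 s.1} :=
    ⟨fun w => ⟨⟨w.1.1, w.2.1⟩, ⟨w.1.2, w.2.2⟩⟩, fun u => ⟨(u.1.1, u.2.1), u.1.2, u.2.2⟩,
      fun _ => rfl, fun _ => rfl⟩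
  have e2 : (Σ h : {h : (F × F × F) × (F × F × F) // Cm h}, {t : Fin 6 → F //
        Fx (t 0) (t 1) (t 2) (t 3) (t 4) h.1.1 ∧ Fx (t 0) (t 1) (t 2) (t 3) (t 4) h.1.2}) ≃
      Σ t : Fin 6 → F, {h : (F × F × F) × (F × F × F) //
        Fx (t 0) (t 1) (t 2) (t 3) (t 4) h.1 ∧ Fx (t 0) (t 1) (t 2) (t 3) (t 4) h.2 ∧ Cm h} :=
    ⟨fun w => ⟨w.2.1, ⟨w.1.1, w.2.2.1, w.2.2.2, w.1.2⟩⟩,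
      fun u => ⟨⟨u.2.1, u.2.2.2.2⟩, ⟨u.1, u.2.2.1, u.2.2.2.1⟩⟩, fun _ => rfl, fun _ => rfl⟩
  have e3 : ∀ h : (F × F × F) × (F × F × F),
      Nat.card {l : Module.Dual F (Fin 6 → F) // l ∘ₗ act h.1 = 0 ∧ l ∘ₗ act h.2 = 0} =
      Nat.card {t : Fin 6 → F //
        Fx (t 0) (t 1) (t 2) (t 3) (t 4) h.1 ∧ Fx (t 0) (t 1) (t 2) (t 3) (t 4) h.2} := by
    intro h
    refine (Nat.card_congr ((dotProductEquiv F (Fin 6)).toEquiv.subtypeEquiv fun t => ?_)).symm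
    rw [← dual_iff h2, ← dual_iff h2]
    rfl
  have e4 : Nat.card (Fin 6 → F) = Fintype.card F ^ 6 := by simp
  have e5 : (∑ t : Fin 6 → F, nn (t 0) (t 1) (t 2) (t 3) (t 4)) =
      Fintype.card F * ∑ a : F, ∑ b : F, ∑ c : F, ∑ d : F, ∑ e : F, nn a b c d e := by
    let ee : (F × F × F × F × F × F) ≃ (Fin 6 → F) :=
      ⟨fun u => ![u.1, u.2.1, u.2.2.1, u.2.2.2.1, u.2.2.2.2.1, u.2.2.2.2.2],
       fun t => (t 0, t 1, t 2, t 3, t 4, t 5), fun u => rfl, fun t => by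
        ext i; fin_cases i <;> rfl⟩
    rw [← ee.sum_comp]
    simp only [Fintype.sum_prod_type]
    change (∑ a : F, ∑ b : F, ∑ c : F, ∑ d : F, ∑ e : F, ∑ _f : F, nn a b c d e) = _
    simp [Finset.mul_sum]
  rw [Nat.card_congr e1, Nat.card_sigma]
  simp_rw [card_pair_dual, e3]
  rw [← Finset.mul_sum, ← Nat.card_sigma, Nat.card_congr e2, Nat.card_sigma, e4]
  change (((Fintype.card F) ^ 6 * (∑ t : Fin 6 → F, nn (t 0) (t 1) (t 2) (t 3) (t 4)) : ℕ) : ℤ) = _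
  rw [e5]
  push_cast
  rw [sum_nn h2]
  ring

end Act

section Grp
open Matrix
variable {F : Type*} [Field F]

abbrev I6 := Fin 3 ⊕ Fin 3

def rho : I6 → ℕ
  | Sum.inl i => i.val
  | Sum.inr i => 5 - i.val

lemma rho_inj : ∀ i j : I6, rho i = rho j → i = j := by decide
lemma rho_lt : ∀ i : I6, rho i < 6 := by decide
lemma rho_pred : ∀ i : I6, 0 < rho i → ∃ k, rho k + 1 = rho i := by decide

def Tri (M : Matrix I6 I6 F) : Prop := ∀ i j, rho j < rho i → M i j = 0

lemma Tri.mul {M N : Matrix I6 I6 F} (hM : Tri M) (hN : Tri N) : Tri (M * N) := by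
  intro i j hij
  rw [Matrix.mul_apply]
  refine Finset.sum_eq_zero fun k _ => ?_
  by_cases hk : rho k < rho i
  · rw [hM _ _ hk, zero_mul]
  · rw [hN _ _ (by omega), mul_zero]

lemma Tri.mul_diag {M N : Matrix I6 I6 F} (hM : Tri M) (hN : Tri N) (i : I6) :
    (M * N) i i = M i i * N i i := by
  rw [Matrix.mul_apply]
  refine Finset.sum_eq_single i (fun k _ hk => ?_) (by simp)
  have : rho k ≠ rho i := fun h => hk (rho_inj _ _ h)
  by_cases hk : rho k < rho i
  · rw [hM _ _ hk, zero_mul]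
  · rw [hN _ _ (by omega), mul_zero]

lemma Tri.one : Tri (1 : Matrix I6 I6 F) := by
  intro i j hij
  rw [Matrix.one_apply_ne]
  rintro rfl
  omega

lemma Tri.pow {M : Matrix I6 I6 F} (hM : Tri M) (n : ℕ) :
    Tri (M ^ n) ∧ ∀ i, (M ^ n) i i = (M i i) ^ n := by
  induction n with
  | zero => exact ⟨by rw [pow_zero]; exact Tri.one, by simp⟩
  | succ n ih =>
    refine ⟨by rw [pow_succ]; exact ih.1.mul hM, fun i => ?_⟩
    rw [pow_succ, ih.1.mul_diag hM, ih.2, pow_succ]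

def Uni (M : Matrix I6 I6 F) : Prop := Tri M ∧ ∀ i, M i i = 1

lemma Uni.sub_one {M : Matrix I6 I6 F} (hM : Uni M) {i j : I6} (h : rho j ≤ rho i) :
    (M - 1) i j = 0 := by
  by_cases hij : i = j
  · subst hij; simp [hM.2]
  · have : rho i ≠ rho j := fun h => hij (rho_inj _ _ h)
    rw [Matrix.sub_apply, hM.1 _ _ (by omega), Matrix.one_apply_ne hij, sub_zero]

/-- If a regular unipotent is conjugated by `g` into a unitriangular matrix, `g` is triangular. -/
lemma tri_of_conj {M N g : Matrix I6 I6 F} (hM : Uni M) (hN : Uni N)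
    (hreg : ∀ i j, rho i + 1 = rho j → M i j ≠ 0) (h : M * g = g * N) : Tri g := by
  have h' : (M - 1) * g = g * (N - 1) := by
    rw [Matrix.sub_mul, Matrix.mul_sub, h, Matrix.one_mul, Matrix.mul_one]
  have key : ∀ n : ℕ, ∀ i j, 10 * rho j + (5 - rho i) = n → rho j < rho i → g i j = 0 := by
    intro n
    induction n using Nat.strong_induction_on with
    | _ n ih =>
      intro i j hn hij
      obtain ⟨k, hk⟩ := rho_pred i (by omega)
      have e := congrFun₂ h' k j
      have hi := rho_lt i
      rw [Matrix.mul_apply, Matrix.mul_apply, Finset.sum_eq_single i, Finset.sum_eq_zero] at e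
      · have hki : k ≠ i := by rintro rfl; omega
        rw [Matrix.sub_apply, Matrix.one_apply_ne hki, sub_zero] at e
        exact (mul_eq_zero.1 e).resolve_left (hreg k i hk)
      · intro l _
        by_cases hl : rho j ≤ rho l
        · rw [hN.sub_one hl, mul_zero]
        · rw [ih _ _ k l rfl (by omega), zero_mul]
          omega
      · intro l _ hl
        have : rho l ≠ rho i := fun h => hl (rho_inj _ _ h)
        have := rho_lt l
        by_cases hkl : rho l ≤ rho k
        · rw [hM.sub_one hkl, zero_mul]
        · rw [ih _ _ l j rfl (by omega), mul_zero]
          omega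
      · simp
  intro i j hij
  exact key _ i j rfl hij

lemma mA_mul_neg (h : F × F × F) : mA h * mA (-h) = 1 := by
  ext i j; fin_cases i <;> fin_cases j <;>
    simp [mA, Matrix.mul_apply, Fin.sum_univ_three] 
  all_goals ring

lemma mA_neg_mul (h : F × F × F) : mA (-h) * mA h = 1 := by
  simpa using mA_mul_neg (-h)

def mP (h : F × F × F) (s : Fin 6 → F) : Matrix I6 I6 F :=
  fromBlocks (mA h) (mS s * (mA (-h))ᵀ) 0 (mA (-h))ᵀ

lemma mP_mem (h : F × F × F) (s : Fin 6 → F) : mP h s ∈ symplecticGroup (Fin 3) F := by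
  rw [mP, SymplecticGroup.fromBlocks_mem_iff]
  refine ⟨by simp, ?_, ?_⟩
  · simp [Matrix.transpose_mul, mS_symm, Matrix.mul_assoc]
  · rw [← Matrix.transpose_mul, mA_neg_mul]; simp

lemma mP_uni (h : F × F × F) (s : Fin 6 → F) : Uni (mP h s) := by
  constructor
  · rintro (i | i) (j | j) hij <;> fin_cases i <;> fin_cases j <;> simp [rho] at hij <;> simp [mP, mA]
  · rintro (i | i) <;> fin_cases i <;> simp [mP, mA]

lemma mP_reg (h2 : (2 : F) ≠ 0) (i j : I6) (hij : rho i + 1 = rho j) :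
    mP ((1, 1, 0) : F × F × F) ![0, 0, 0, 0, 0, 1] i j ≠ 0 := by
  revert hij
  rcases i with i | i <;> rcases j with j | j <;> fin_cases i <;> fin_cases j <;> intro hij <;> 
    simp [rho] at hij <;>
    simp [mP, mA, mS, Matrix.vecMul, dotProduct, Fin.sum_univ_three, h2]

lemma mP_surj (h2 : (2 : F) ≠ 0) {M : Matrix I6 I6 F} (hM : M ∈ symplecticGroup (Fin 3) F)
    (hU : Uni M) : ∃ h s, mP h s = M := by
  obtain ⟨A, B, C, D, rfl⟩ : ∃ A B C D, M = fromBlocks A B C D :=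
    ⟨_, _, _, _, (fromBlocks_toBlocks M).symm⟩
  obtain ⟨-, hB, hD⟩ := SymplecticGroup.fromBlocks_mem_iff.1 hM
  have hC : C = 0 := by
    ext i j
    exact hU.1 (Sum.inr i) (Sum.inl j) (by simp only [rho]; omega)
  subst hC
  have hA : mA (A 0 1 / 2, A 1 2, A 0 2 - A 0 1 / 2 * A 1 2) = A := by
    have d := fun i => hU.2 (Sum.inl i)
    have z := fun i j => hU.1 (Sum.inl i) (Sum.inl j)
    simp only [fromBlocks_apply₁₁, rho] at d z
    ext i j; fin_cases i <;> fin_cases j <;> simp [mA, d, z]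
    field_simp
  generalize (A 0 1 / 2, A 1 2, A 0 2 - A 0 1 / 2 * A 1 2) = h at hA
  subst hA
  have hD' : D = (mA (-h))ᵀ := by
    have : (mA h)ᵀ * D = 1 := by simpa using hD
    calc D = ((mA (-h))ᵀ * (mA h)ᵀ) * D := by
            rw [← Matrix.transpose_mul, mA_mul_neg]; simp
      _ = _ := by rw [Matrix.mul_assoc, this, Matrix.mul_one]
  subst hD'
  have hDA : (mA (-h))ᵀ * (mA h)ᵀ = 1 := by rw [← Matrix.transpose_mul, mA_mul_neg]; simp
  have hAD : (mA h)ᵀ * (mA (-h))ᵀ = 1 := by rw [← Matrix.transpose_mul, mA_neg_mul]; simp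
  refine ⟨h, vec (B * (mA h)ᵀ), ?_⟩
  have hS : (B * (mA h)ᵀ)ᵀ = B * (mA h)ᵀ := by
    rw [Matrix.transpose_mul, Matrix.transpose_transpose]
    rw [Matrix.transpose_transpose] at hB
    calc mA h * Bᵀ = mA h * (Bᵀ * (mA (-h))ᵀ) * (mA h)ᵀ := by
          rw [Matrix.mul_assoc, Matrix.mul_assoc, hDA, Matrix.mul_one]
      _ = B * (mA h)ᵀ := by
          rw [hB, ← Matrix.mul_assoc, mA_mul_neg, Matrix.one_mul]
  rw [mP, mS_vec hS, Matrix.mul_assoc, hAD, Matrix.mul_one]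

lemma mA_inj (h2 : (2 : F) ≠ 0) {h h' : F × F × F} (e : mA h = mA h') : h = h' := by
  have e1 := congrFun₂ e 0 1
  have e2 := congrFun₂ e 1 2
  have e3 := congrFun₂ e 0 2
  simp [mA, h2] at e1 e2 e3
  rw [e1, e2] at e3
  exact Prod.ext e1 (Prod.ext e2 (by simpa using e3))

lemma mP_inj (h2 : (2 : F) ≠ 0) {h h' : F × F × F} {s s' : Fin 6 → F} (e : mP h s = mP h' s') :
    h = h' ∧ s = s' := by
  obtain ⟨e1, e2, -, -⟩ := fromBlocks_inj.1 e
  have := mA_inj h2 e1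
  subst this
  refine ⟨rfl, ?_⟩
  have hDA : (mA (-h))ᵀ * (mA h)ᵀ = 1 := by rw [← Matrix.transpose_mul, mA_mul_neg]; simp
  have e3 := congrArg (fun X => X * (mA h)ᵀ) e2
  simp only [Matrix.mul_assoc, hDA, Matrix.mul_one] at e3
  rw [← vec_mS s, e3, vec_mS]

lemma mA_comm_iff (h2 : (2 : F) ≠ 0) (h h' : F × F × F) :
    mA h * mA h' = mA h' * mA h ↔ Cm (h, h') := by
  constructor
  · intro e
    have e3 := congrFun₂ e 0 2
    simp [mA, Matrix.mul_apply, Fin.sum_univ_three] at e3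
    apply mul_left_cancel₀ h2
    linear_combination e3
  · intro e
    simp only [Cm] at e
    ext i j; fin_cases i <;> fin_cases j <;> simp [mA, Matrix.mul_apply, Fin.sum_univ_three]
    · ring
    · linear_combination 2 * e
    · ring

lemma mP_comm_iff (h2 : (2 : F) ≠ 0) (h h' : F × F × F) (s s' : Fin 6 → F) :
    mP h s * mP h' s' = mP h' s' * mP h s ↔ CP ((h, h'), (s, s')) := by
  rw [mP, mP, fromBlocks_multiply, fromBlocks_multiply, fromBlocks_inj]
  simp only [CP, act_eq_iff, ← mA_comm_iff h2, Matrix.mul_zero, Matrix.zero_mul, add_zero, zero_add,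
    true_and]
  have hDA : ∀ h : F × F × F, (mA (-h))ᵀ * (mA h)ᵀ = 1 := fun h => by
    rw [← Matrix.transpose_mul, mA_mul_neg]; simp
  have hAD : ∀ h : F × F × F, (mA h)ᵀ * (mA (-h))ᵀ = 1 := fun h => by
    rw [← Matrix.transpose_mul, mA_neg_mul]; simp
  have key : mA h * mA h' = mA h' * mA h → (mA (-h))ᵀ * (mA (-h'))ᵀ = (mA (-h'))ᵀ * (mA (-h))ᵀ := by
    intro e
    rw [← Matrix.transpose_mul, ← Matrix.transpose_mul, (mA_comm_iff h2 _ _).2]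
    have := (mA_comm_iff h2 _ _).1 e
    simp only [Cm] at this ⊢
    simp
    linear_combination - this
  have e1 : mA h * (mS s' * (mA (-h'))ᵀ) + mS s * (mA (-h))ᵀ * (mA (-h'))ᵀ =
      (mA h * mS s' * (mA h)ᵀ + mS s) * ((mA (-h))ᵀ * (mA (-h'))ᵀ) := by
    rw [Matrix.add_mul, ← Matrix.mul_assoc (_ * _ * _), Matrix.mul_assoc (_ * _) _ (mA (-h))ᵀ, hAD,
      Matrix.mul_one]
    simp only [Matrix.mul_assoc]
  have e2 : mA h' * (mS s * (mA (-h))ᵀ) + mS s' * (mA (-h'))ᵀ * (mA (-h))ᵀ =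
      (mA h' * mS s * (mA h')ᵀ + mS s') * ((mA (-h'))ᵀ * (mA (-h))ᵀ) := by
    rw [Matrix.add_mul, ← Matrix.mul_assoc (_ * _ * _), Matrix.mul_assoc (_ * _) _ (mA (-h'))ᵀ, hAD,
      Matrix.mul_one]
    simp only [Matrix.mul_assoc]
  rw [e1, e2]
  constructor
  · rintro ⟨c, e, -⟩
    refine ⟨c, ?_⟩
    rw [key c] at e
    have e3 := congrArg (fun X => X * ((mA h)ᵀ * (mA h')ᵀ)) e
    have : ((mA (-h'))ᵀ * (mA (-h))ᵀ) * ((mA h)ᵀ * (mA h')ᵀ) = 1 := by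
      rw [Matrix.mul_assoc, ← Matrix.mul_assoc _ _ (mA h')ᵀ, hDA, Matrix.one_mul, hDA]
    generalize (mA (-h'))ᵀ * (mA (-h))ᵀ = P at e3 this
    generalize (mA h)ᵀ * (mA h')ᵀ = Q at e3 this
    generalize mA h * mS s' * (mA h)ᵀ + mS s = X at e3 ⊢
    generalize mA h' * mS s * (mA h')ᵀ + mS s' = Y at e3 ⊢
    simpa only [Matrix.mul_assoc, this, Matrix.mul_one] using e3
  · rintro ⟨c, e⟩
    exact ⟨c, by rw [e, key c], key c⟩

end Grp

section Main
open Matrix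
variable {F : Type*} [Field F] [Fintype F]

instance : Finite (symplecticGroup (Fin 3) F) := by
  classical
  exact Subtype.finite

def UU (F : Type*) [Field F] [Fintype F] : Subgroup (symplecticGroup (Fin 3) F) where
  carrier := {g | Uni g.1}
  mul_mem' {a b} ha hb := ⟨ha.1.mul hb.1, fun i => by
    have := ha.1.mul_diag hb.1 i
    rw [ha.2, hb.2, mul_one] at this
    exact this⟩
  one_mem' := ⟨Tri.one, fun i => by simp⟩
  inv_mem' {a} ha := by
    have h : a⁻¹ = a ^ (orderOf a - 1) := by
      rw [inv_eq_iff_mul_eq_one, ← pow_succ', Nat.sub_add_cancel (orderOf_pos a), pow_orderOf_eq_one]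
    rw [h]
    change Uni (a.1 ^ (orderOf a - 1))
    have := ha.1.pow (orderOf a - 1)
    exact ⟨this.1, fun i => by rw [this.2, ha.2, one_pow]⟩

noncomputable def eU (h2 : (2 : F) ≠ 0) : (F × F × F) × (Fin 6 → F) ≃ UU F :=
  Equiv.ofBijective (fun u => ⟨⟨mP u.1 u.2, mP_mem _ _⟩, mP_uni _ _⟩) (by
    constructor
    · rintro ⟨h, s⟩ ⟨h', s'⟩ e
      have e' : mP h s = mP h' s' := congrArg (fun u : UU F => u.1.1) e
      obtain ⟨rfl, rfl⟩ := mP_inj h2 e'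
      rfl
    · rintro ⟨⟨M, hM⟩, hU⟩
      obtain ⟨h, s, e⟩ := mP_surj h2 hM hU
      exact ⟨(h, s), Subtype.ext (Subtype.ext e)⟩)

lemma card_UU (h2 : (2 : F) ≠ 0) : Nat.card (UU F) = Fintype.card F ^ 9 := by
  rw [← Nat.card_congr (eU h2)]
  simp
  ring

lemma card_comm_UU (h2 : (2 : F) ≠ 0) :
    Nat.card {w : UU F × UU F // Commute w.1 w.2} =
    Nat.card {w : ((F × F × F) × (F × F × F)) × ((Fin 6 → F) × (Fin 6 → F)) // CP w} := by
  refine (Nat.card_congr (((Equiv.prodProdProdComm _ _ _ _).trans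
    ((eU h2).prodCongr (eU h2))).subtypeEquiv ?_)).symm
  rintro ⟨⟨h, h'⟩, ⟨s, s'⟩⟩
  rw [← mP_comm_iff h2]
  constructor
  · intro e
    exact Subtype.ext (Subtype.ext e)
  · intro e
    exact congrArg (fun u : UU F => u.1.1) e.eq

lemma sylow_eq {p : ℕ} [Fact p.Prime] [CharP F p] (h2 : (2 : F) ≠ 0)
    (Q : Sylow p (symplecticGroup (Fin 3) F)) (hQ : UU F ≤ Q) : (Q : Subgroup _) = UU F := by
  refine le_antisymm ?_ hQ
  rw [← Subgroup.subgroupOf_eq_top]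
  by_contra hne
  have hnil : Group.IsNilpotent (Q : Subgroup (symplecticGroup (Fin 3) F)) := Q.isPGroup'.isNilpotent
  have hlt := Group.normalizerCondition_of_isNilpotent ((UU F).subgroupOf Q) (lt_top_iff_ne_top.2 hne)
  obtain ⟨g, hg, hgU⟩ := SetLike.exists_of_lt hlt
  apply hgU
  rw [Subgroup.mem_subgroupOf]
  rw [Subgroup.mem_normalizer_iff''] at hg
  let u0 : symplecticGroup (Fin 3) F := ⟨mP ((1, 1, 0) : F × F × F) ![0, 0, 0, 0, 0, 1], mP_mem _ _⟩
  have hu0 : u0 ∈ UU F := mP_uni _ _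
  have h1 := (hg ⟨u0, hQ hu0⟩).1 (Subgroup.mem_subgroupOf.2 hu0)
  rw [Subgroup.mem_subgroupOf] at h1
  have h3 : Uni ((g.1⁻¹ * u0 * g.1 : symplecticGroup (Fin 3) F)).1 := h1
  have e : u0.1 * g.1.1 = g.1.1 * ((g.1⁻¹ * u0 * g.1 : symplecticGroup (Fin 3) F)).1 := by
    have : u0 * g.1 = g.1 * (g.1⁻¹ * u0 * g.1) := by group
    exact congrArg Subtype.val this
  have htri : Tri g.1.1 := tri_of_conj (mP_uni _ _) h3 (mP_reg h2) e
  refine ⟨htri, fun i => ?_⟩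
  obtain ⟨k, hk⟩ := Q.isPGroup' g
  have hk' : g.1.1 ^ (p ^ k) = 1 := by
    have := congrArg (fun u : (Q : Subgroup (symplecticGroup (Fin 3) F)) => u.1.1) hk
    simpa using this
  have hd := (htri.pow (p ^ k)).2 i
  rw [hk', Matrix.one_apply_eq] at hd
  have : (g.1.1 i i - 1) ^ (p ^ k) = 0 := by
    rw [sub_pow_char_pow, ← hd, one_pow, sub_self]
  exact sub_eq_zero.1 (eq_zero_of_pow_eq_zero this)

end Main

end Sp6

/-- The number of conjugacy classes of a Sylow `p`-subgroup of `Sp_6(F_q)`,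
for `p` an odd prime and `q` a power of `p`, written in `v = q - 1`. -/
theorem card_conjClasses_sylow_sp6 (p q : ℕ) (hp : p.Prime) (hodd : Odd p)
    (hq : ∃ n : ℕ, 0 < n ∧ q = p ^ n)
    (F : Type*) [Field F] [Fintype F] (hF : Fintype.card F = q)
    (P : Sylow p (Matrix.symplecticGroup (Fin 3) F)) (v : ℕ) (hv : v = q - 1) :
    Nat.card (ConjClasses (P : Subgroup (Matrix.symplecticGroup (Fin 3) F))) =
      v ^ 4 + 8 * v ^ 3 + 16 * v ^ 2 + 9 * v + 1 := by
  have : Fact p.Prime := ⟨hp⟩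
  obtain ⟨n, hn, rfl⟩ := hq
  have : CharP F p := by
    obtain ⟨r, hr⟩ := CharP.exists F
    obtain ⟨m, hrp, hm⟩ := FiniteField.card F r
    have : r = p := by
      have h : r ∣ p ^ n := by
        rw [← hF, hm]; exact dvd_pow_self _ m.ne_zero
      exact (Nat.prime_dvd_prime_iff_eq hrp hp).1 (hrp.dvd_of_dvd_pow h)
    rwa [← this]
  have h2 : (2 : F) ≠ 0 := by
    apply Ring.two_ne_zero
    rw [ringChar.eq F p]
    rintro rfl
    exact absurd hodd (by decide)
  have hUp : IsPGroup p (Sp6.UU F) := IsPGroup.of_card (n := n * 9) (by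
    rw [Sp6.card_UU h2, hF, pow_mul])
  obtain ⟨Q, hQ⟩ := hUp.exists_le_sylow
  have hQU := Sp6.sylow_eq h2 Q hQ
  let e : (P : Subgroup (Matrix.symplecticGroup (Fin 3) F)) ≃* Sp6.UU F :=
    (Sylow.equiv P Q).trans (MulEquiv.subgroupCongr hQU)
  have hc := card_comm_eq_card_conjClasses_mul_card (P : Subgroup (Matrix.symplecticGroup (Fin 3) F))
  have hc2 : Nat.card {w : ↥(P : Subgroup (Matrix.symplecticGroup (Fin 3) F)) ×
      ↥(P : Subgroup (Matrix.symplecticGroup (Fin 3) F)) // Commute w.1 w.2} =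
      Nat.card {w : Sp6.UU F × Sp6.UU F // Commute w.1 w.2} := by
    refine Nat.card_congr ((e.toEquiv.prodCongr e.toEquiv).subtypeEquiv ?_)
    rintro ⟨a, b⟩
    constructor
    · intro h
      exact h.map e
    · intro h
      have := h.map e.symm
      simpa using this
  rw [hc2, Sp6.card_comm_UU h2, Nat.card_congr e.toEquiv, Sp6.card_UU h2] at hc
  have hc3 := Sp6.card_CP h2
  rw [hc] at hc3
  have hqv : Fintype.card F = v + 1 := by
    have := Fintype.card_pos (α := F)
    omega
  rw [hqv] at hc3
  push_cast at hc3
  have hpos : ((v : ℤ) + 1) ^ 9 ≠ 0 := by positivity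
  have : ((Nat.card (ConjClasses (P : Subgroup (Matrix.symplecticGroup (Fin 3) F))) : ℕ) : ℤ) =
      ((v ^ 4 + 8 * v ^ 3 + 16 * v ^ 2 + 9 * v + 1 : ℕ) : ℤ) := by
    apply mul_right_cancel₀ hpos
    rw [hc3]
    push_cast
    ring
  exact_mod_cast this
end

section
/- Let p be an odd prime, q a power of p, and let P be a Sylow p-subgroup of the symplectic group Sp_8(F_q). Then the number of conjugacy classes of P equals v⁶ + 11v⁵ + 48v⁴ + 88v³ + 64v² + 16v + 1, where v = q − 1. -/
set_option linter.unusedSectionVars false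
set_option linter.unusedSimpArgs false

namespace SpEight
section count
variable {F : Type*} [Field F] [Fintype F]

theorem card_param {α β : Type*} {P : β → Prop} {Q : α → Prop} (f : α → β) (r : β → α)
    (h1 : ∀ x, Q x → P (f x)) (h2 : ∀ y, P y → Q (r y))
    (h3 : ∀ x, Q x → r (f x) = x) (h4 : ∀ y, P y → f (r y) = y) :
    Nat.card {y // P y} = Nat.card {x // Q x} :=
  Nat.card_congr ⟨fun y => ⟨r y.1, h2 _ y.2⟩, fun x => ⟨f x.1, h1 _ x.2⟩,
    fun y => Subtype.ext (h4 _ y.2), fun x => Subtype.ext (h3 _ x.2)⟩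

theorem card_param' {α β : Type*} {P : β → Prop} (f : α → β) (r : β → α)
    (h1 : ∀ x, P (f x)) (h3 : ∀ x, r (f x) = x) (h4 : ∀ y, P y → f (r y) = y) :
    Nat.card {y // P y} = Nat.card α :=
  Nat.card_congr ⟨fun y => r y.1, fun x => ⟨f x, h1 _⟩,
    fun y => Subtype.ext (h4 _ y.2), fun x => h3 x⟩

theorem card_snd {α β : Type*} (Q : β → Prop) :
    Nat.card {x : α × β // Q x.2} = Nat.card α * Nat.card {y // Q y} := by
  rw [← Nat.card_prod]
  exact Nat.card_congr ⟨fun x => (x.1.1, ⟨x.1.2, x.2⟩), fun x => ⟨(x.1, x.2.1), x.2.2⟩,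
    fun _ => rfl, fun _ => rfl⟩

theorem card_fib {α β : Type*} [Fintype α] [Finite β] (Q : α → β → Prop) :
    Nat.card {x : α × β // Q x.1 x.2} = ∑ a, Nat.card {y // Q a y} := by
  rw [← Nat.card_sigma]
  exact Nat.card_congr ⟨fun x => ⟨x.1.1, ⟨x.1.2, x.2⟩⟩, fun x => ⟨(x.1, x.2.1), x.2.2⟩,
    fun _ => rfl, fun _ => rfl⟩

theorem sum_ite [DecidableEq F] {v : ℕ} (hv : Nat.card F = v + 1) (t : F) (a b : ℕ) :
    ∑ x : F, (if x = t then a else b) = a + v * b := by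
  have h := Finset.sum_erase_add Finset.univ (fun x : F => if x = t then a else b) (Finset.mem_univ t)
  rw [← h]
  have : ∑ x ∈ Finset.univ.erase t, (if x = t then a else b) = ∑ x ∈ Finset.univ.erase t, b := by
    apply Finset.sum_congr rfl
    intro x hx
    simp [Finset.ne_of_mem_erase hx]
  rw [this, Finset.sum_const, Finset.card_erase_of_mem (Finset.mem_univ _), Finset.card_univ,
    ← Nat.card_eq_fintype_card, hv]
  simp [add_comm]

theorem sum_const' {v : ℕ} (hv : Nat.card F = v + 1) (a : ℕ) :
    ∑ _x : F, a = (v + 1) * a := by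
  rw [Finset.sum_const, Finset.card_univ, ← Nat.card_eq_fintype_card, hv]; simp

/-- solutions of one wedge equation -/
theorem card_line [DecidableEq F] {v : ℕ} (hv : Nat.card F = v + 1) (s t : F) :
    Nat.card {w : F × F // s * w.2 = t * w.1} =
      if s = 0 then (if t = 0 then (v + 1) ^ 2 else v + 1) else v + 1 := by
  split_ifs with h1 h2
  · rw [card_param' (α := F × F) (fun w => w) (fun w => w)]
    · simp only [Nat.card_prod, hv]; ring
    all_goals simp [h1, h2]
  · rw [card_param' (α := F) (fun w => (0, w)) (fun w => w.2)]
    · exact hv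
    all_goals simp [h1, h2]
  · rw [card_param' (α := F) (fun w => (w, t * w / s)) (fun w => w.1)]
    · exact hv
    · intro x; field_simp
    · intro x; rfl
    · rintro ⟨x, y⟩ h; simp at h ⊢; field_simp; exact h.symm

def D2 (w : (F × F) × (F × F)) : Prop := w.1.1 * w.2.2 = w.1.2 * w.2.1

def D3 (w : (F × F) × (F × F) × (F × F)) : Prop :=
  w.1.1 * w.2.1.2 = w.1.2 * w.2.1.1 ∧ w.1.1 * w.2.2.2 = w.1.2 * w.2.2.1

theorem card_D2 {v : ℕ} (hv : Nat.card F = v + 1) :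
    Nat.card {w : (F × F) × (F × F) // D2 w} = (v + 1) * ((v + 1) ^ 2 + v) := by
  classical
  have := card_fib (α := F × F) (β := F × F) (fun s w => s.1 * w.2 = s.2 * w.1)
  simp only [D2]
  rw [this, Fintype.sum_prod_type]
  simp only [card_line hv]
  have : ∀ x : F, ∑ y : F, (if x = 0 then (if y = 0 then (v + 1) ^ 2 else v + 1) else v + 1)
     = if x = 0 then (v + 1) ^ 2 + v * (v + 1) else (v + 1) * (v + 1) := by
    intro x
    split_ifs with h
    · rw [sum_ite hv]
    · rw [sum_const' hv]
  simp only [this, sum_ite hv]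
  ring

theorem card_D3 {v : ℕ} (hv : Nat.card F = v + 1) :
    Nat.card {w : (F × F) × (F × F) × (F × F) // D3 w} =
      (v + 1) ^ 2 * ((v + 1) ^ 2 + v * (v + 2)) := by
  classical
  have := card_fib (α := F × F) (β := (F × F) × (F × F))
    (fun s w => s.1 * w.1.2 = s.2 * w.1.1 ∧ s.1 * w.2.2 = s.2 * w.2.1)
  simp only [D3]
  rw [this, Fintype.sum_prod_type]
  have h2 : ∀ s t : F, Nat.card {w : (F × F) × (F × F) // s * w.1.2 = t * w.1.1 ∧ s * w.2.2 = t * w.2.1}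
     = if s = 0 then (if t = 0 then (v + 1) ^ 4 else (v + 1) ^ 2) else (v + 1) ^ 2 := by
    intro s t
    have h3 : Nat.card {w : (F × F) × (F × F) // s * w.1.2 = t * w.1.1 ∧ s * w.2.2 = t * w.2.1}
      = Nat.card ({w : F × F // s * w.2 = t * w.1} × {w : F × F // s * w.2 = t * w.1}) :=
      Nat.card_congr ⟨fun x => (⟨x.1.1, x.2.1⟩, ⟨x.1.2, x.2.2⟩), fun x => ⟨(x.1.1, x.2.1), x.1.2, x.2.2⟩,
        fun _ => rfl, fun _ => rfl⟩
    rw [h3, Nat.card_prod, card_line hv]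
    split_ifs <;> ring
  simp only [h2]
  have : ∀ x : F, ∑ y : F, (if x = 0 then (if y = 0 then (v + 1) ^ 4 else (v + 1) ^ 2) else (v + 1) ^ 2)
     = if x = 0 then (v + 1) ^ 4 + v * (v + 1) ^ 2 else (v + 1) * (v + 1) ^ 2 := by
    intro x
    split_ifs with h
    · rw [sum_ite hv]
    · rw [sum_const' hv]
  simp only [this, sum_ite hv]
  ring

/-- solutions of one linear equation in four unknowns -/
theorem card_lin4 [DecidableEq F] {v : ℕ} (hv : Nat.card F = v + 1) (a b c d : F) :
    Nat.card {w : F × F × F × F // a * w.1 + b * w.2.1 + c * w.2.2.1 + d * w.2.2.2 = 0} =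
      if a = 0 then (if b = 0 then (if c = 0 then (if d = 0 then (v + 1) ^ 4 else (v + 1) ^ 3)
        else (v + 1) ^ 3) else (v + 1) ^ 3) else (v + 1) ^ 3 := by
  split_ifs with h1 h2 h3 h4
  · rw [card_param' (α := F × F × F × F) (fun w => w) (fun w => w)]
    · simp only [Nat.card_prod, hv]; ring
    all_goals simp [h1, h2, h3, h4]
  · rw [card_param' (α := F × F × F) (fun w => (w.1, w.2.1, w.2.2, 0)) (fun w => (w.1, w.2.1, w.2.2.1))]
    · simp only [Nat.card_prod, hv]; ring
    all_goals simp [*]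
  · rw [card_param' (α := F × F × F) (fun w => (w.1, w.2.1, -d * w.2.2 / c, w.2.2)) (fun w => (w.1, w.2.1, w.2.2.2))]
    · simp only [Nat.card_prod, hv]; ring
    · intro x; simp [*]; field_simp; ring
    · intro x; rfl
    · rintro ⟨x, y, z, w⟩ h; simp [*] at h ⊢; field_simp; linear_combination -h
  · rw [card_param' (α := F × F × F) (fun w => (w.1, (-d * w.2.2 - c * w.2.1) / b, w.2.1, w.2.2)) (fun w => (w.1, w.2.2.1, w.2.2.2))]
    · simp only [Nat.card_prod, hv]; ring
    · intro x; simp [*]; field_simp; ring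
    · intro x; rfl
    · rintro ⟨x, y, z, w⟩ h; simp [*] at h ⊢; field_simp; linear_combination -h
  · rw [card_param' (α := F × F × F) (fun w => ((-d * w.2.2 - c * w.2.1 - b * w.1) / a, w.1, w.2.1, w.2.2)) (fun w => (w.2.1, w.2.2.1, w.2.2.2))]
    · simp only [Nat.card_prod, hv]; ring
    · intro x; simp [*]; field_simp; ring
    · intro x; rfl
    · rintro ⟨x, y, z, w⟩ h; simp at h ⊢; field_simp; linear_combination -h

theorem card_D4 {v : ℕ} (hv : Nat.card F = v + 1) :
    Nat.card {w : (F × F × F × F) × (F × F × F × F) //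
      w.1.1 * w.2.1 + w.1.2.1 * w.2.2.1 + w.1.2.2.1 * w.2.2.2.1 + w.1.2.2.2 * w.2.2.2.2 = 0} =
      (v + 1) ^ 3 * ((v + 1) ^ 4 + v) := by
  classical
  have := card_fib (α := F × F × F × F) (β := F × F × F × F)
    (fun s w => s.1 * w.1 + s.2.1 * w.2.1 + s.2.2.1 * w.2.2.1 + s.2.2.2 * w.2.2.2 = 0)
  rw [this]
  simp only [Fintype.sum_prod_type, card_lin4 hv]
  have e : ∀ (c : Prop) [Decidable c] (g : F → ℕ) (b : ℕ), ∑ y : F, (if c then g y else b)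
     = if c then ∑ y, g y else (v + 1) * b := by
    intro c _ g b
    split_ifs with h
    · rfl
    · rw [sum_const' hv]
  simp only [e, sum_ite hv]
  ring
end count
end SpEight

namespace SpEight
section leaves
variable {F : Type*} [Field F] [Fintype F]

def K3 (a b : F × F × F) : Prop := a.1 * b.2.2 = b.1 * a.2.2

def E3 (d22 d23 d24 d33 d34 : F) (a : F × F × F) : Prop :=
  d22 * a.1 = 0 ∧ d22 * a.2.1 + d23 * a.2.2 = 0 ∧ d23 * a.1 = 0 ∧
  a.1 * d24 + d23 * a.2.1 + d33 * a.2.2 = 0 ∧ a.2.1 * d24 + a.2.2 * d34 = 0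

theorem card_E3 [DecidableEq F] {v : ℕ} (hv : Nat.card F = v + 1) (d22 d23 d24 d33 d34 : F) :
    Nat.card {x : (F × F × F) × (F × F × F) //
      E3 d22 d23 d24 d33 d34 x.1 ∧ E3 d22 d23 d24 d33 d34 x.2 ∧ K3 x.1 x.2} =
      if d22 = 0 then
        if d23 = 0 then
          if d24 = 0 then
            if d33 = 0 then
              if d34 = 0 then (v + 1) ^ 3 * ((v + 1) ^ 2 + v)
              else (v + 1) ^ 4
            else (v + 1) ^ 4
          else (v + 1) ^ 2
        else 1
      else
        if d33 = d23 ^ 2 * d22⁻¹ then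
          if d34 = d23 * d24 * d22⁻¹ then (v + 1) ^ 2 else 1
        else 1 := by
  simp only [E3, K3]
  split_ifs with h1 h2 h3 h4 h5 h6 h7
  · rw [card_param (α := (F × F) × ((F × F) × (F × F))) (Q := fun x => D2 x.2)
      (fun ⟨⟨a24, b24⟩, ⟨a23, b23⟩, a34, b34⟩ => ((a23, a24, a34), (b23, b24, b34)))
      (fun ⟨⟨a23, a24, a34⟩, b23, b24, b34⟩ => ((a24, b24), (a23, b23), (a34, b34))), card_snd D2,
      card_D2 hv, Nat.card_prod, hv]
    · ring
    all_goals simp only [D2, Prod.forall]; grind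
  · rw [card_param' (α := (F × F) × (F × F))
      (fun ⟨⟨a24, b24⟩, ⟨a23, b23⟩⟩ => ((a23, a24, 0), (b23, b24, 0)))
      (fun ⟨⟨a23, a24, a34⟩, b23, b24, b34⟩ => ((a24, b24), (a23, b23)))]
    · simp only [Nat.card_prod, hv]; ring
    all_goals simp only [Prod.forall]; grind
  · rw [card_param' (α := (F × F) × (F × F))
      (fun ⟨⟨a24, b24⟩, ⟨a23, b23⟩⟩ => ((a23, a24, 0), (b23, b24, 0)))
      (fun ⟨⟨a23, a24, a34⟩, b23, b24, b34⟩ => ((a24, b24), (a23, b23)))]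
    · simp only [Nat.card_prod, hv]; ring
    all_goals simp only [Prod.forall]; grind
  · rw [card_param' (α := (F × F))
      (fun ⟨a34, b34⟩ => ((-d33 * a34 * d24⁻¹, -d34 * a34 * d24⁻¹, a34), (-d33 * b34 * d24⁻¹, -d34 * b34 * d24⁻¹, b34)))
      (fun ⟨⟨a23, a24, a34⟩, b23, b24, b34⟩ => (a34, b34))]
    · simp only [Nat.card_prod, hv]; ring
    all_goals simp only [Prod.forall]; grind
  · rw [card_param' (α := Unit)
      (fun _ => (((0 : F), (0 : F), (0 : F)), ((0 : F), (0 : F), (0 : F))))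
      (fun ⟨⟨a23, a24, a34⟩, b23, b24, b34⟩ => ())]
    · simp
    all_goals simp only [Prod.forall]; grind
  · rw [card_param' (α := (F × F))
      (fun ⟨a34, b34⟩ => ((0, -d23 * a34 * d22⁻¹, a34), (0, -d23 * b34 * d22⁻¹, b34)))
      (fun ⟨⟨a23, a24, a34⟩, b23, b24, b34⟩ => (a34, b34))]
    · simp only [Nat.card_prod, hv]; ring
    all_goals simp only [Prod.forall]; grind
  · rw [card_param' (α := Unit)
      (fun _ => (((0 : F), (0 : F), (0 : F)), ((0 : F), (0 : F), (0 : F))))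
      (fun ⟨⟨a23, a24, a34⟩, b23, b24, b34⟩ => ())]
    · simp
    all_goals simp only [Prod.forall]; grind
  · rw [card_param' (α := Unit)
      (fun _ => (((0 : F), (0 : F), (0 : F)), ((0 : F), (0 : F), (0 : F))))
      (fun ⟨⟨a23, a24, a34⟩, b23, b24, b34⟩ => ())]
    · simp
    all_goals simp only [Prod.forall]; grind

abbrev V6 (F : Type*) := F × F × F × F × F × F

/-- coordinates `a12, a13, a14, a23, a24, a34` -/
def K6 (a b : V6 F) : Prop :=
  a.1 * b.2.2.2.1 = b.1 * a.2.2.2.1 ∧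
  a.2.2.2.1 * b.2.2.2.2.2 = b.2.2.2.1 * a.2.2.2.2.2 ∧
  a.1 * b.2.2.2.2.1 + a.2.1 * b.2.2.2.2.2 = b.1 * a.2.2.2.2.1 + b.2.1 * a.2.2.2.2.2

def E6 (c11 c12 c13 c14 c22 c23 c24 c33 c34 : F) : V6 F → Prop :=
  fun ⟨a12, a13, a14, a23, a24, a34⟩ =>
    c11 * a12 = 0 ∧ c11 * a13 + c12 * a23 = 0 ∧ c11 * a14 + c12 * a24 + c13 * a34 = 0 ∧
    a12 * c12 = 0 ∧ a12 * c13 + c12 * a13 + c22 * a23 = 0 ∧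
    a12 * c14 + c12 * a14 + c22 * a24 + c23 * a34 = 0 ∧
    a13 * c13 + a23 * c23 = 0 ∧
    a13 * c14 + a23 * c24 + c13 * a14 + c23 * a24 + c33 * a34 = 0 ∧
    a14 * c14 + a24 * c24 + a34 * c34 = 0

noncomputable def N6 (c11 c12 c13 c14 c22 c23 c24 c33 c34 : F) : ℕ :=
  Nat.card {x : V6 F × V6 F // E6 c11 c12 c13 c14 c22 c23 c24 c33 c34 x.1 ∧
    E6 c11 c12 c13 c14 c22 c23 c24 c33 c34 x.2 ∧ K6 x.1 x.2}

theorem N6_case1 (c11 c12 c13 c14 c22 c23 c24 c33 c34 : F) (h : c11 ≠ 0) :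
    N6 c11 c12 c13 c14 c22 c23 c24 c33 c34 =
    Nat.card {x : (F × F × F) × (F × F × F) //
      E3 (c22 - c12 ^ 2 * c11⁻¹) (c23 - c12 * c13 * c11⁻¹) (c24 - c12 * c14 * c11⁻¹)
        (c33 - c13 ^ 2 * c11⁻¹) (c34 - c13 * c14 * c11⁻¹) x.1 ∧
      E3 (c22 - c12 ^ 2 * c11⁻¹) (c23 - c12 * c13 * c11⁻¹) (c24 - c12 * c14 * c11⁻¹)
        (c33 - c13 ^ 2 * c11⁻¹) (c34 - c13 * c14 * c11⁻¹) x.2 ∧ K3 x.1 x.2} := by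
  have hi : c11 * c11⁻¹ = 1 := mul_inv_cancel₀ h
  generalize c11⁻¹ = i at hi ⊢
  have A : ∀ a : F × F × F, E3 (c22 - c12 ^ 2 * i) (c23 - c12 * c13 * i) (c24 - c12 * c14 * i)
        (c33 - c13 ^ 2 * i) (c34 - c13 * c14 * i) a → E6 c11 c12 c13 c14 c22 c23 c24 c33 c34
        (0, -c12 * a.1 * i, -(c12 * a.2.1 + c13 * a.2.2) * i, a.1, a.2.1, a.2.2) := by
    rintro ⟨a23, a24, a34⟩ ⟨e1, e2, e3, e4, e5⟩
    simp only at e1 e2 e3 e4 e5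
    refine ⟨by ring, ?_, ?_, by ring, ?_, ?_, ?_, ?_, ?_⟩
    · linear_combination (-c12 * a23) * hi
    · linear_combination (-(c12 * a24 + c13 * a34)) * hi
    · linear_combination e1
    · linear_combination e2
    · linear_combination e3
    · linear_combination e4
    · linear_combination e5
  have B : ∀ a12 a13 a14 a23 a24 a34 : F,
      E6 c11 c12 c13 c14 c22 c23 c24 c33 c34 (a12, a13, a14, a23, a24, a34) →
      a12 = 0 ∧ a13 = -c12 * a23 * i ∧ a14 = -(c12 * a24 + c13 * a34) * i ∧
      E3 (c22 - c12 ^ 2 * i) (c23 - c12 * c13 * i) (c24 - c12 * c14 * i)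
        (c33 - c13 ^ 2 * i) (c34 - c13 * c14 * i) (a23, a24, a34) := by
    rintro a12 a13 a14 a23 a24 a34 ⟨e1, e2, e3, e4, e5, e6, e7, e8, e9⟩
    have h1 : a12 = 0 := by linear_combination i * e1 - a12 * hi
    have h2 : a13 = -c12 * a23 * i := by linear_combination i * e2 - a13 * hi
    have h3 : a14 = -(c12 * a24 + c13 * a34) * i := by linear_combination i * e3 - a14 * hi
    refine ⟨h1, h2, h3, ?_⟩
    subst h1 h2 h3
    simp only [E3]
    refine ⟨?_, ?_, ?_, ?_, ?_⟩
    · linear_combination e5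
    · linear_combination e6
    · linear_combination e7
    · linear_combination e8
    · linear_combination e9
  unfold N6
  refine card_param
    (fun x => ((0, -c12 * x.1.1 * i, -(c12 * x.1.2.1 + c13 * x.1.2.2) * i, x.1.1, x.1.2.1, x.1.2.2),
       (0, -c12 * x.2.1 * i, -(c12 * x.2.2.1 + c13 * x.2.2.2) * i, x.2.1, x.2.2.1, x.2.2.2)))
    (fun ⟨⟨a12, a13, a14, a23, a24, a34⟩, b12, b13, b14, b23, b24, b34⟩ =>
      ((a23, a24, a34), (b23, b24, b34))) ?_ ?_ ?_ ?_
  · rintro ⟨a, b⟩ ⟨ha, hb, hk⟩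
    refine ⟨A a ha, A b hb, ?_⟩
    simp only [K3] at hk
    refine ⟨by ring, hk, ?_⟩
    linear_combination (-c12 * i) * hk
  · rintro ⟨⟨a12, a13, a14, a23, a24, a34⟩, b12, b13, b14, b23, b24, b34⟩ ⟨ha, hb, hk⟩
    exact ⟨(B _ _ _ _ _ _ ha).2.2.2, (B _ _ _ _ _ _ hb).2.2.2, hk.2.1⟩
  · rintro ⟨⟨a23, a24, a34⟩, b23, b24, b34⟩ _
    rfl
  · rintro ⟨⟨a12, a13, a14, a23, a24, a34⟩, b12, b13, b14, b23, b24, b34⟩ ⟨ha, hb, hk⟩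
    obtain ⟨h1, h2, h3, -⟩ := B _ _ _ _ _ _ ha
    obtain ⟨h4, h5, h6, -⟩ := B _ _ _ _ _ _ hb
    simp only [h1, h2, h3, h4, h5, h6]

theorem N6_case2 [DecidableEq F] {v : ℕ} (hv : Nat.card F = v + 1)
    (c12 c13 c14 c22 c23 c24 c33 c34 : F) (h : c12 ≠ 0) :
    N6 0 c12 c13 c14 c22 c23 c24 c33 c34 =
    if c33 = (2 * c13 * c23 * c12 - c22 * c13 ^ 2) * (c12⁻¹) ^ 2 then
      if c34 = (c13 * c24 * c12 + c14 * c23 * c12 - c22 * c13 * c14) * (c12⁻¹) ^ 2 then (v + 1) ^ 2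
      else 1
    else 1 := by
  unfold N6
  split_ifs with h1 h2
  · rw [card_param' (α := F × F)
    (fun ⟨a34, b34⟩ =>
      ((0, 0, -(c22 * (- c13 * a34 * c12⁻¹) + c23 * a34) * c12⁻¹, 0, - c13 * a34 * c12⁻¹, a34),
       (0, 0, -(c22 * (- c13 * b34 * c12⁻¹) + c23 * b34) * c12⁻¹, 0, - c13 * b34 * c12⁻¹, b34)))
    (fun ⟨⟨a12, a13, a14, a23, a24, a34⟩, b12, b13, b14, b23, b24, b34⟩ => (a34, b34))]
    · simp only [Nat.card_prod, hv]; ring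
    all_goals simp only [E6, K6, Prod.forall]; grind
  all_goals
    rw [card_param' (α := Unit)
      (fun _ => (((0 : F), (0 : F), (0 : F), (0 : F), (0 : F), (0 : F)), ((0 : F), (0 : F), (0 : F), (0 : F), (0 : F), (0 : F))))
      (fun _ => ())]
    · simp
    all_goals simp only [E6, K6, Prod.forall]; grind

theorem N6_case3 [DecidableEq F] {v : ℕ} (hv : Nat.card F = v + 1)
    (c13 c14 c22 c23 c24 c33 c34 : F) (h : c13 ≠ 0) :
    N6 0 0 c13 c14 c22 c23 c24 c33 c34 =
    if c22 = 0 then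
      if c24 = c14 * c13⁻¹ * c23 then (v + 1) ^ 4
      else (v + 1) ^ 2
    else (v + 1) ^ 2 := by
  unfold N6
  split_ifs with h1 h2
  · rw [card_param' (α := (F × F) × (F × F))
    (fun ⟨⟨a23, a24⟩, b23, b24⟩ =>
      ((0, -a23 * c23 * c13⁻¹, -(-a23 * c23 * c13⁻¹ * c14 + a23 * c24 + c23 * a24) * c13⁻¹, a23, a24, 0),
       (0, -b23 * c23 * c13⁻¹, -(-b23 * c23 * c13⁻¹ * c14 + b23 * c24 + c23 * b24) * c13⁻¹, b23, b24, 0)))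
    (fun ⟨⟨a12, a13, a14, a23, a24, a34⟩, b12, b13, b14, b23, b24, b34⟩ => ((a23, a24), (b23, b24)))]
    · simp only [Nat.card_prod, hv]; ring
    all_goals simp only [E6, K6, Prod.forall]; grind
  all_goals
    rw [card_param' (α := (F × F))
    (fun ⟨a23, b23⟩ =>
      ((-c22 * a23 * c13⁻¹, -a23 * c23 * c13⁻¹, - a23 * c24 * c13⁻¹, a23, a23 * c14 * c13⁻¹, 0),
       (-c22 * b23 * c13⁻¹, -b23 * c23 * c13⁻¹, - b23 * c24 * c13⁻¹, b23, b23 * c14 * c13⁻¹, 0)))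
    (fun ⟨⟨a12, a13, a14, a23, a24, a34⟩, b12, b13, b14, b23, b24, b34⟩ => (a23, b23))]
    · simp only [Nat.card_prod, hv]; ring
    all_goals simp only [E6, K6, Prod.forall]; grind

theorem N6_case4 [DecidableEq F] {v : ℕ} (hv : Nat.card F = v + 1)
    (c14 c22 c23 c24 c33 c34 : F) (h : c14 ≠ 0) :
    N6 0 0 0 c14 c22 c23 c24 c33 c34 =
    if c22 = 0 then
      if c23 = 0 then (v + 1) ^ 3 * ((v + 1) ^ 2 + v)
      else (v + 1) ^ 4
    else (v + 1) ^ 4 := by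
  unfold N6
  split_ifs with h1 h2
  · rw [card_param (α := (F × F) × ((F × F) × (F × F))) (Q := fun x => D2 x.2)
    (fun ⟨⟨a24, b24⟩, ⟨a23, b23⟩, a34, b34⟩ =>
      ((0, -(a23 * c24 + c33 * a34) * c14⁻¹, -(a24 * c24 + a34 * c34) * c14⁻¹, a23, a24, a34),
       (0, -(b23 * c24 + c33 * b34) * c14⁻¹, -(b24 * c24 + b34 * c34) * c14⁻¹, b23, b24, b34)))
    (fun ⟨⟨a12, a13, a14, a23, a24, a34⟩, b12, b13, b14, b23, b24, b34⟩ =>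
      ((a24, b24), (a23, b23), (a34, b34))), card_snd D2, card_D2 hv, Nat.card_prod, hv]
    · ring
    all_goals simp only [E6, K6, D2, Prod.forall]; grind
  all_goals
    rw [card_param' (α := (F × F) × (F × F))
    (fun ⟨⟨a24, b24⟩, a34, b34⟩ =>
      ((-(c22 * a24 + c23 * a34) * c14⁻¹, -(c23 * a24 + c33 * a34) * c14⁻¹, -(a24 * c24 + a34 * c34) * c14⁻¹, 0, a24, a34),
       (-(c22 * b24 + c23 * b34) * c14⁻¹, -(c23 * b24 + c33 * b34) * c14⁻¹, -(b24 * c24 + b34 * c34) * c14⁻¹, 0, b24, b34)))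
    (fun ⟨⟨a12, a13, a14, a23, a24, a34⟩, b12, b13, b14, b23, b24, b34⟩ => ((a24, b24), (a34, b34)))]
    · simp only [Nat.card_prod, hv]; ring
    all_goals simp only [E6, K6, Prod.forall]; grind

theorem N6_case5a [DecidableEq F] {v : ℕ} (hv : Nat.card F = v + 1)
    (c22 c23 c24 c33 c34 : F) (h : c22 ≠ 0) :
    N6 0 0 0 0 c22 c23 c24 c33 c34 =
    if c33 = c23 ^ 2 * c22⁻¹ then
      if c34 = c23 * c24 * c22⁻¹ then (v + 1) ^ 5 * ((v + 1) ^ 2 + v)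
      else (v + 1) ^ 6
    else (v + 1) ^ 6 := by
  unfold N6
  split_ifs with h1 h2
  · rw [card_param (α := (F × F × F × F) × ((F × F) × (F × F))) (Q := fun x => D2 x.2)
    (fun ⟨⟨a12, b12, a14, b14⟩, ⟨x, y⟩, a34, b34⟩ =>
      ((a12, x + c23 * c22⁻¹ * a12, a14, 0, -c23 * c22⁻¹ * a34, a34),
       (b12, y + c23 * c22⁻¹ * b12, b14, 0, -c23 * c22⁻¹ * b34, b34)))
    (fun ⟨⟨a12, a13, a14, a23, a24, a34⟩, b12, b13, b14, b23, b24, b34⟩ =>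
      ((a12, b12, a14, b14), (a13 - c23 * c22⁻¹ * a12, b13 - c23 * c22⁻¹ * b12), (a34, b34))),
      card_snd D2, card_D2 hv]
    · simp only [Nat.card_prod, hv]; ring
    all_goals simp only [E6, K6, D2, Prod.forall]; grind
  all_goals
    rw [card_param' (α := (F × F × F) × (F × F × F))
    (fun ⟨⟨a12, a13, a14⟩, b12, b13, b14⟩ => ((a12, a13, a14, 0, 0, 0), (b12, b13, b14, 0, 0, 0)))
    (fun ⟨⟨a12, a13, a14, a23, a24, a34⟩, b12, b13, b14, b23, b24, b34⟩ => ((a12, a13, a14), (b12, b13, b14)))]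
    · simp only [Nat.card_prod, hv]; ring
    all_goals simp only [E6, K6, Prod.forall]; grind

theorem N6_case5b {v : ℕ} (hv : Nat.card F = v + 1)
    (c23 c24 c33 c34 : F) (h : c23 ≠ 0) :
    N6 0 0 0 0 0 c23 c24 c33 c34 = (v + 1) ^ 6 := by
  unfold N6
  rw [card_param' (α := (F × F × F) × (F × F × F))
    (fun ⟨⟨a12, a13, a14⟩, b12, b13, b14⟩ => ((a12, a13, a14, 0, 0, 0), (b12, b13, b14, 0, 0, 0)))
    (fun ⟨⟨a12, a13, a14, a23, a24, a34⟩, b12, b13, b14, b23, b24, b34⟩ => ((a12, a13, a14), (b12, b13, b14)))]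
  · simp only [Nat.card_prod, hv]; ring
  all_goals simp only [E6, K6, Prod.forall]; first | (simp; done) | grind

theorem N6_case5c [DecidableEq F] {v : ℕ} (hv : Nat.card F = v + 1)
    (c24 c33 c34 : F) (h : c24 ≠ 0) :
    N6 0 0 0 0 0 0 c24 c33 c34 =
    if c33 = 0 then (v + 1) ^ 5 * ((v + 1) ^ 2 + v)
    else (v + 1) ^ 4 * ((v + 1) ^ 2 + v * (v + 2)) := by
  unfold N6
  split_ifs with h1
  · rw [card_param (α := (F × F × F × F) × ((F × F) × (F × F))) (Q := fun x => D2 x.2)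
    (fun ⟨⟨a12, b12, a14, b14⟩, ⟨x, y⟩, a34, b34⟩ =>
      ((a12, x + c34 * c24⁻¹ * a12, a14, 0, -c34 * c24⁻¹ * a34, a34),
       (b12, y + c34 * c24⁻¹ * b12, b14, 0, -c34 * c24⁻¹ * b34, b34)))
    (fun ⟨⟨a12, a13, a14, a23, a24, a34⟩, b12, b13, b14, b23, b24, b34⟩ =>
      ((a12, b12, a14, b14), (a13 - c34 * c24⁻¹ * a12, b13 - c34 * c24⁻¹ * b12), (a34, b34))),
      card_snd D2, card_D2 hv]
    · simp only [Nat.card_prod, hv]; ring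
    all_goals simp only [E6, K6, D2, Prod.forall]; grind
  · rw [card_param (α := (F × F) × ((F × F) × (F × F) × (F × F))) (Q := fun x => D3 x.2)
    (fun ⟨⟨a14, b14⟩, ⟨a34, b34⟩, ⟨a12, b12⟩, x, y⟩ =>
      ((a12, x + c34 * c24⁻¹ * a12, a14, -c33 * c24⁻¹ * a34, -c34 * c24⁻¹ * a34, a34),
       (b12, y + c34 * c24⁻¹ * b12, b14, -c33 * c24⁻¹ * b34, -c34 * c24⁻¹ * b34, b34)))
    (fun ⟨⟨a12, a13, a14, a23, a24, a34⟩, b12, b13, b14, b23, b24, b34⟩ =>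
      ((a14, b14), (a34, b34), (a12, b12), (a13 - c34 * c24⁻¹ * a12, b13 - c34 * c24⁻¹ * b12))),
      card_snd D3, card_D3 hv]
    · simp only [Nat.card_prod, hv]; ring
    all_goals simp only [E6, K6, D3, Prod.forall]; grind

theorem N6_case5d {v : ℕ} (hv : Nat.card F = v + 1)
    (c33 c34 : F) (h : c33 ≠ 0 ∨ c34 ≠ 0) :
    N6 0 0 0 0 0 0 0 c33 c34 = (v + 1) ^ 6 * ((v + 1) ^ 2 + v * (v + 2)) := by
  unfold N6
  rw [card_param (α := (F × F × F × F) × ((F × F) × (F × F) × (F × F))) (Q := fun x => D3 x.2)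
    (fun ⟨⟨a13, b13, a14, b14⟩, ⟨a12, b12⟩, ⟨a23, b23⟩, a24, b24⟩ =>
      ((a12, a13, a14, a23, a24, 0), (b12, b13, b14, b23, b24, 0)))
    (fun ⟨⟨a12, a13, a14, a23, a24, a34⟩, b12, b13, b14, b23, b24, b34⟩ =>
      ((a13, b13, a14, b14), (a12, b12), (a23, b23), (a24, b24))),
      card_snd D3, card_D3 hv]
  · simp only [Nat.card_prod, hv]; ring
  all_goals simp only [E6, K6, D3, Prod.forall]; grind

def Q5 (y : (F × F) × ((F × F × F × F) × (F × F × F × F))) : Prop :=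
      y.2.1.1 * y.1.2 = y.2.1.2.1 * y.1.1 ∧ y.1.1 * y.2.1.2.2.2 = y.1.2 * y.2.1.2.2.1 ∧
      y.2.1.1 * y.2.2.1 + y.2.1.2.1 * y.2.2.2.1 + y.2.1.2.2.1 * y.2.2.2.2.1 +
        y.2.1.2.2.2 * y.2.2.2.2.2 = 0

/-- commuting pairs of strictly upper triangular matrices, `a23` singled out -/
theorem N6_case5e [DecidableEq F] {v : ℕ} (hv : Nat.card F = v + 1) :
    N6 (0 : F) 0 0 0 0 0 0 0 0 = (v + 1) ^ 7 * (2 * v ^ 2 + 5 * v + 1) := by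
  unfold N6
  rw [card_param (α := (F × F) × (F × F) × ((F × F × F × F) × (F × F × F × F)))
    (Q := fun x => Q5 x.2)
    (fun ⟨⟨a14, b14⟩, ⟨a23, b23⟩, ⟨a12, b12, a34, b34⟩, ⟨b24, a24, b13, a13⟩⟩ =>
      ((a12, a13, a14, a23, -a24, a34), (b12, -b13, b14, b23, b24, b34)))
    (fun ⟨⟨a12, a13, a14, a23, a24, a34⟩, b12, b13, b14, b23, b24, b34⟩ =>
      ((a14, b14), (a23, b23), (a12, b12, a34, b34), (b24, -a24, -b13, a13))),
      card_snd Q5]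
  · have := card_fib (α := F × F) (β := (F × F × F × F) × (F × F × F × F)) (fun s y =>
      y.1.1 * s.2 = y.1.2.1 * s.1 ∧ s.1 * y.1.2.2.2 = s.2 * y.1.2.2.1 ∧
      y.1.1 * y.2.1 + y.1.2.1 * y.2.2.1 + y.1.2.2.1 * y.2.2.2.1 +
        y.1.2.2.2 * y.2.2.2.2 = 0)
    simp only [Q5]
    rw [this, Fintype.sum_prod_type]
    have h2 : ∀ s t : F, Nat.card {y : (F × F × F × F) × (F × F × F × F) //
      y.1.1 * t = y.1.2.1 * s ∧ s * y.1.2.2.2 = t * y.1.2.2.1 ∧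
      y.1.1 * y.2.1 + y.1.2.1 * y.2.2.1 + y.1.2.2.1 * y.2.2.2.1 +
        y.1.2.2.2 * y.2.2.2.2 = 0} = if s = 0 then (if t = 0 then (v + 1) ^ 3 * ((v + 1) ^ 4 + v)
          else (v + 1) ^ 3 * ((v + 1) ^ 2 + v)) else (v + 1) ^ 3 * ((v + 1) ^ 2 + v) := by
      intro s t
      split_ifs with h1 h2
      · rw [← card_D4 hv]
        congr 1
        simp [h1, h2]
      · rw [card_param (α := (F × F) × ((F × F) × (F × F))) (Q := fun x => D2 x.2)
          (fun ⟨⟨u, w⟩, ⟨b12, b34⟩, x, y⟩ => ((0, b12, 0, b34), (u, y, w, -x)))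
          (fun ⟨⟨a12, b12, a34, b34⟩, ⟨b24, a24, b13, a13⟩⟩ => ((b24, b13), (b12, b34), (-a13, a24))),
          card_snd D2, card_D2 hv]
        · simp only [Nat.card_prod, hv]; ring
        all_goals simp only [D2, Prod.forall]; grind
      · rw [card_param (α := (F × F) × ((F × F) × (F × F))) (Q := fun x => D2 x.2)
          (fun ⟨⟨u, w⟩, ⟨a12, a34⟩, x, y⟩ => ((a12, a12 * t * s⁻¹, a34, a34 * t * s⁻¹),
              (y - t * s⁻¹ * u, u, -x - t * s⁻¹ * w, w)))
          (fun ⟨⟨a12, b12, a34, b34⟩, ⟨b24, a24, b13, a13⟩⟩ =>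
            ((a24, a13), (a12, a34), (-(b13 + t * s⁻¹ * a13), b24 + t * s⁻¹ * a24))),
          card_snd D2, card_D2 hv]
        · simp only [Nat.card_prod, hv]; ring
        all_goals simp only [D2, Prod.forall]; grind
    simp only [h2]
    have e : ∀ (c : Prop) [Decidable c] (g : F → ℕ) (b : ℕ), ∑ y : F, (if c then g y else b)
       = if c then ∑ y, g y else (v + 1) * b := by
      intro c _ g b
      split_ifs with h
      · rfl
      · rw [sum_const' hv]
    simp only [e, sum_ite hv, Nat.card_prod, hv]
    ring
  all_goals simp only [E6, K6, Q5, Prod.forall]; grind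

end leaves
end SpEight

namespace SpEight
section leaves
variable {F : Type*} [Field F] [Fintype F]
theorem sum_split [DecidableEq F] {v : ℕ} (hv : Nat.card F = v + 1) (g : F → ℕ) (b : ℕ)
    (h : ∀ x, x ≠ 0 → g x = b) : ∑ x, g x = g 0 + v * b := by
  rw [← sum_ite hv 0]
  apply Finset.sum_congr rfl
  intro x _
  split_ifs with h1
  · rw [h1]
  · exact h x h1

theorem sum_ite_left [DecidableEq F] {v : ℕ} (hv : Nat.card F = v + 1) (c : Prop) [Decidable c] (g : F → ℕ) (b : ℕ) :
    ∑ y : F, (if c then g y else b) = if c then ∑ y, g y else (v + 1) * b := by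
  split_ifs with h
  · rfl
  · rw [sum_const' hv]

theorem sum_ite_right [DecidableEq F] (c : Prop) [Decidable c] (g g' : F → ℕ) :
    ∑ y : F, (if c then g y else g' y) = if c then ∑ y, g y else ∑ y, g' y := by
  split_ifs with h <;> rfl

theorem sum_N6 {v : ℕ} (hv : Nat.card F = v + 1) :
    ∑ c11 : F, ∑ c12 : F, ∑ c13 : F, ∑ c14 : F, ∑ c22 : F, ∑ c23 : F, ∑ c24 : F, ∑ c33 : F,
      ∑ c34 : F, N6 c11 c12 c13 c14 c22 c23 c24 c33 c34 =
    (v + 1) ^ 5 * (v ^ 6 + 11 * v ^ 5 + 48 * v ^ 4 + 88 * v ^ 3 + 64 * v ^ 2 + 16 * v + 1) := by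
  classical
  -- first row zero except possibly the last cases, from the inside out
  have s5 : ∑ c22 : F, ∑ c23 : F, ∑ c24 : F, ∑ c33 : F, ∑ c34 : F, N6 0 0 0 0 c22 c23 c24 c33 c34 =
      (((v + 1) ^ 7 * (2 * v ^ 2 + 5 * v + 1) + v * ((v + 1) ^ 6 * ((v + 1) ^ 2 + v * (v + 2)))
        + v * ((v + 1) * ((v + 1) ^ 6 * ((v + 1) ^ 2 + v * (v + 2)))))
        + v * ((v + 1) * ((v + 1) ^ 5 * ((v + 1) ^ 2 + v)) + v * ((v + 1) * ((v + 1) ^ 4 * ((v + 1) ^ 2 + v * (v + 2))))))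
       + v * ((v + 1) ^ 3 * (v + 1) ^ 6) + v * ((v + 1) ^ 2 * ((v + 1) ^ 5 * ((v + 1) ^ 2 + v) + v * (v + 1) ^ 6 + v * ((v + 1) * (v + 1) ^ 6))) := by
    rw [sum_split hv _ ((v + 1) ^ 2 * ((v + 1) ^ 5 * ((v + 1) ^ 2 + v) + v * (v + 1) ^ 6 + v * ((v + 1) * (v + 1) ^ 6)))]
    · rw [sum_split hv _ ((v + 1) ^ 3 * (v + 1) ^ 6)]
      · rw [sum_split hv _ ((v + 1) * ((v + 1) ^ 5 * ((v + 1) ^ 2 + v)) + v * ((v + 1) * ((v + 1) ^ 4 * ((v + 1) ^ 2 + v * (v + 2)))))]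
        · rw [sum_split hv _ ((v + 1) * ((v + 1) ^ 6 * ((v + 1) ^ 2 + v * (v + 2))))]
          · rw [sum_split hv _ ((v + 1) ^ 6 * ((v + 1) ^ 2 + v * (v + 2)))]
            · rw [N6_case5e hv]
            · intro x hx; exact N6_case5d hv _ _ (Or.inr hx)
          · intro x hx
            simp only [N6_case5d hv _ _ (Or.inl hx), sum_const' hv]
        · intro x hx
          simp only [N6_case5c hv _ _ _ hx, sum_const' hv, sum_ite hv, sum_ite_left hv, sum_ite_right, mul_ite]
          try ring
      · intro x hx
        simp only [N6_case5b hv _ _ _ _ hx, sum_const' hv]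
        ring
    · intro x hx
      simp only [N6_case5a hv _ _ _ _ _ hx, sum_const' hv, sum_ite hv, sum_ite_left hv, sum_ite_right, mul_ite]
      ring
  have s4 : ∀ c14 : F, c14 ≠ 0 → ∑ c22 : F, ∑ c23 : F, ∑ c24 : F, ∑ c33 : F, ∑ c34 : F, N6 0 0 0 c14 c22 c23 c24 c33 c34 =
      (v + 1) ^ 3 * ((v + 1) ^ 3 * ((v + 1) ^ 2 + v) + v * (v + 1) ^ 4 + v * (v + 1) ^ 5) := by
    intro x hx
    simp only [N6_case4 hv _ _ _ _ _ _ hx, sum_const' hv, sum_ite hv, sum_ite_left hv, sum_ite_right, mul_ite]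
    ring
  have s3 : ∀ c13 : F, c13 ≠ 0 → ∑ c14 : F, ∑ c22 : F, ∑ c23 : F, ∑ c24 : F, ∑ c33 : F, ∑ c34 : F, N6 0 0 c13 c14 c22 c23 c24 c33 c34 =
      (v + 1) ^ 6 * ((v + 1) ^ 2 + v * (v + 2)) := by
    intro x hx
    simp only [N6_case3 hv _ _ _ _ _ _ _ hx, sum_const' hv, sum_ite hv, sum_ite_left hv, sum_ite_right, mul_ite]
    ring
  have s2 : ∀ c12 : F, c12 ≠ 0 → ∑ c13 : F, ∑ c14 : F, ∑ c22 : F, ∑ c23 : F, ∑ c24 : F, ∑ c33 : F, ∑ c34 : F, N6 0 c12 c13 c14 c22 c23 c24 c33 c34 =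
      (v + 1) ^ 5 * ((v + 1) ^ 2 + v * (v + 2)) := by
    intro x hx
    simp only [N6_case2 hv _ _ _ _ _ _ _ _ hx, sum_const' hv, sum_ite hv, sum_ite_left hv, sum_ite_right, mul_ite]
    ring
  have s1 : ∀ c11 : F, c11 ≠ 0 → ∑ c12 : F, ∑ c13 : F, ∑ c14 : F, ∑ c22 : F, ∑ c23 : F, ∑ c24 : F, ∑ c33 : F, ∑ c34 : F, N6 c11 c12 c13 c14 c22 c23 c24 c33 c34 =
      (v + 1) ^ 5 * (v ^ 4 + 8 * v ^ 3 + 16 * v ^ 2 + 9 * v + 1) := by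
    intro x hx
    simp only [N6_case1 _ _ _ _ _ _ _ _ _ hx, card_E3 hv, sub_eq_zero, sub_eq_iff_eq_add]
    simp only [sum_ite_right, sum_const' hv, sum_ite hv, sum_ite_left hv, sum_ite_right, mul_ite]
    ring
  rw [sum_split hv _ _ s1, sum_split hv _ _ s2, sum_split hv _ _ s3, sum_split hv _ _ s4, s5]
  ring

end leaves
end SpEight

namespace SpEight
section duality
open Matrix
variable {F : Type*} [Field F] [Fintype F]

theorem card_ker_dual {V : Type*} [AddCommGroup V] [Module F V] [Finite V]
    (B : LinearMap.BilinForm F V) (hB : B.Nondegenerate) (f h f' h' : V →ₗ[F] V)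
    (hf : ∀ x y, B (f x) y = B x (f' y)) (hh : ∀ x y, B (h x) y = B x (h' y)) :
    Nat.card {x : V × V // x.1 + f x.2 = x.2 + h x.1} =
      Nat.card V * Nat.card {c : V // f' c = c ∧ h' c = c} := by
  classical
  have : Fintype V := Fintype.ofFinite V
  have hfin : Module.Finite F V := Module.Finite.of_finite
  let φ : V × V →ₗ[F] V := (LinearMap.id - h).coprod (f - LinearMap.id)
  let R := LinearMap.range φ
  have e1 : Nat.card {x : V × V // x.1 + f x.2 = x.2 + h x.1} = Nat.card (LinearMap.ker φ) := by
    apply Nat.card_congr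
    apply Equiv.subtypeEquivRight
    rintro ⟨x, y⟩
    simp only [φ, LinearMap.mem_ker, LinearMap.coprod_apply, LinearMap.sub_apply, LinearMap.id_apply]
    rw [← sub_eq_zero]
    constructor <;> intro e <;> rw [← e] <;> abel
  have e2 : Nat.card {c : V // f' c = c ∧ h' c = c} = Nat.card (B.orthogonal R) := by
    apply Nat.card_congr
    apply Equiv.subtypeEquivRight
    intro c
    rw [LinearMap.BilinForm.mem_orthogonal_iff]
    constructor
    · rintro ⟨k1, k2⟩ _ ⟨⟨x, y⟩, rfl⟩
      simp [φ, hf, hh, k1, k2]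
    · intro k
      constructor
      · rw [← sub_eq_zero]
        apply hB.2
        intro x
        have := k _ ⟨(0, x), rfl⟩
        simpa [φ, hf, hh] using this
      · rw [← sub_eq_zero]
        apply hB.2
        intro x
        have := k _ ⟨(x, 0), rfl⟩
        simp [φ, hf, hh] at this
        rw [map_sub, sub_eq_zero]
        rw [sub_eq_zero] at this
        exact this.symm
  rw [e1, e2]
  have d1 := LinearMap.finrank_range_add_finrank_ker φ
  have d2 := LinearMap.BilinForm.finrank_orthogonal hB R
  have d3 : Module.finrank F R ≤ Module.finrank F V := Submodule.finrank_le R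
  rw [Module.finrank_prod] at d1
  rw [Module.natCard_eq_pow_finrank (K := F) (V := V),
    Module.natCard_eq_pow_finrank (K := F) (V := B.orthogonal R),
    Module.natCard_eq_pow_finrank (K := F) (V := LinearMap.ker φ), ← pow_add]
  congr 1
  change Module.finrank F R + _ = _ at d1
  omega

abbrev M4 (F : Type*) := Matrix (Fin 4) (Fin 4) F

def Sy (F : Type*) [Field F] : Submodule F (M4 F) where
  carrier := {S | Sᵀ = S}
  add_mem' := by
    intro a b ha hb
    simp only [Set.mem_ofPred_eq, transpose_add] at *
    rw [ha, hb]
  zero_mem' := by simp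
  smul_mem' := by
    intro c a ha
    simp only [Set.mem_ofPred_eq, transpose_smul] at *
    rw [ha]

theorem mem_Sy (S : M4 F) : S ∈ Sy F ↔ Sᵀ = S := Iff.rfl

def cj (g : M4 F) : Sy F →ₗ[F] Sy F where
  toFun S := ⟨g * S.1 * gᵀ, by
    have := S.2
    rw [mem_Sy] at *
    simp [Matrix.mul_assoc, this]⟩
  map_add' S T := by ext1; simp [Matrix.mul_add, Matrix.add_mul]
  map_smul' c T := by ext1; simp

def trf (F : Type*) [Field F] : LinearMap.BilinForm F (Sy F) :=
  LinearMap.mk₂ F (fun S T => (S.1 * T.1).trace)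
    (by intros; simp [Matrix.add_mul]) (by intros; simp)
    (by intros; simp [Matrix.mul_add]) (by intros; simp)

theorem trf_apply (S T : Sy F) : trf F S T = (S.1 * T.1).trace := rfl

theorem trf_nondeg (h2 : (2 : F) ≠ 0) : (trf F).Nondegenerate := by
  have key : ∀ S : Sy F, (∀ T : Sy F, (T.1 * S.1).trace = 0) → S = 0 := by
    intro S h
    ext1
    have hS := S.2
    rw [mem_Sy] at hS
    show S.1 = 0
    rw [Matrix.ext_iff_trace_mul_left]
    intro x
    have := h ⟨x + xᵀ, by rw [mem_Sy]; simp [add_comm]⟩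
    simp only [Matrix.add_mul, trace_add] at this
    rw [← Matrix.trace_transpose (xᵀ * S.1), transpose_mul, hS, transpose_transpose,
      trace_mul_comm S.1, ← two_mul] at this
    simpa [h2] using this
  constructor
  · intro S h
    apply key
    intro T
    rw [trace_mul_comm]
    exact h T
  · intro S h
    exact key S h

theorem trf_cj (g : M4 F) (S T : Sy F) : trf F (cj g S) T = trf F S (cj gᵀ T) := by
  simp only [trf_apply, cj, LinearMap.coe_mk, AddHom.coe_mk, transpose_transpose]
  rw [Matrix.mul_assoc, Matrix.mul_assoc, trace_mul_comm]
  simp only [Matrix.mul_assoc]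

theorem card_pairs (h2 : (2 : F) ≠ 0) (g h : M4 F) :
    Nat.card {x : Sy F × Sy F // x.1 + cj g x.2 = x.2 + cj h x.1} =
      Nat.card (Sy F) * Nat.card {C : Sy F // cj gᵀ C = C ∧ cj hᵀ C = C} :=
  card_ker_dual (trf F) (trf_nondeg h2) _ _ _ _ (trf_cj g) (trf_cj h)

abbrev V10 (F : Type*) := F × F × F × F × F × F × F × F × F × F

def sm : V10 F → M4 F := fun ⟨c11, c12, c13, c14, c22, c23, c24, c33, c34, c44⟩ =>
  !![c11, c12, c13, c14; c12, c22, c23, c24; c13, c23, c33, c34; c14, c24, c34, c44]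

def syEquiv : V10 F ≃ Sy F where
  toFun c := ⟨sm c, by
    rw [mem_Sy]
    obtain ⟨c11, c12, c13, c14, c22, c23, c24, c33, c34, c44⟩ := c
    ext i j
    fin_cases i <;> fin_cases j <;> rfl⟩
  invFun S := (S.1 0 0, S.1 0 1, S.1 0 2, S.1 0 3, S.1 1 1, S.1 1 2, S.1 1 3, S.1 2 2, S.1 2 3, S.1 3 3)
  left_inv c := by
    obtain ⟨c11, c12, c13, c14, c22, c23, c24, c33, c34, c44⟩ := c
    rfl
  right_inv S := by
    ext i j
    have hS : ∀ i j, S.1 i j = S.1 j i := fun i j => congrFun (congrFun S.2 j) i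
    fin_cases i <;> fin_cases j <;> first | rfl | exact hS _ _

theorem card_Sy : Nat.card (Sy F) = Nat.card F ^ 10 := by
  rw [← Nat.card_congr (syEquiv (F := F))]
  simp only [Nat.card_prod]
  ring

end duality
end SpEight

namespace SpEight
section cayley
open Matrix
variable {F : Type*} [Field F] [Fintype F]

def nm : V6 F → M4 F := fun ⟨a12, a13, a14, a23, a24, a34⟩ =>
  !![0, a12, a13, a14; 0, 0, a23, a24; 0, 0, 0, a34; 0, 0, 0, 0]

theorem nm_pow (a : V6 F) : nm a * nm a * nm a * nm a = 0 := by
  obtain ⟨a12, a13, a14, a23, a24, a34⟩ := a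
  ext i j
  fin_cases i <;> fin_cases j <;> simp [nm, Matrix.mul_apply, Fin.sum_univ_four]

def cy (A : M4 F) : M4 F := 1 + (2 : F) • A + (2 : F) • (A * A) + (2 : F) • (A * A * A)

def icy (g : M4 F) : M4 F :=
  (2⁻¹ : F) • (g - 1) - (4⁻¹ : F) • ((g - 1) * (g - 1)) + (8⁻¹ : F) • ((g - 1) * (g - 1) * (g - 1))

theorem cy_mul (A : M4 F) (h : A * A * A * A = 0) : cy A * (1 - A) = 1 + A := by
  have : cy A * (1 - A) = 1 + A - (2 : F) • (A * A * A * A) := by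
    simp only [cy, Matrix.mul_sub, Matrix.add_mul, Matrix.mul_one, Matrix.one_mul, Matrix.smul_mul]
    module
  rw [this, h]; simp

theorem inv_sub (A : M4 F) (h : A * A * A * A = 0) : (1 - A) * (1 + A + A * A + A * A * A) = 1 := by
  have : (1 - A) * (1 + A + A * A + A * A * A) = 1 - A * A * A * A := by
    simp only [Matrix.mul_add, Matrix.sub_mul, Matrix.mul_one, Matrix.one_mul, ← Matrix.mul_assoc]
    abel
  rw [this, h]; simp

theorem cy_fix (h2 : (2 : F) ≠ 0) (A C : M4 F) (h : A * A * A * A = 0) :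
    (cy A)ᵀ * C * cy A = C ↔ Aᵀ * C + C * A = 0 := by
  have e1 := cy_mul A h
  have e2 := inv_sub A h
  set B := 1 + A + A * A + A * A * A
  have e3 : (cy A)ᵀ * C * cy A = C ↔
      (1 - A)ᵀ * ((cy A)ᵀ * C * cy A) * (1 - A) = (1 - A)ᵀ * C * (1 - A) := by
    constructor
    · intro k; rw [k]
    · intro k
      have e2' : Bᵀ * (1 - A)ᵀ = 1 := by rw [← transpose_mul, e2, transpose_one]
      have := congrArg (fun X => Bᵀ * X * B) k
      simp only [Matrix.mul_assoc, e2, Matrix.mul_one] at this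
      simpa only [← Matrix.mul_assoc, e2', Matrix.one_mul] using this
  have e4 : (1 - A)ᵀ * ((cy A)ᵀ * C * cy A) * (1 - A) = (1 + A)ᵀ * C * (1 + A) := by
    rw [← e1, transpose_mul]; simp only [Matrix.mul_assoc]
  rw [e3, e4, ← sub_eq_zero]
  have e5 : (1 + A)ᵀ * C * (1 + A) - (1 - A)ᵀ * C * (1 - A) = (2 : F) • (Aᵀ * C + C * A) := by
    simp only [transpose_add, transpose_sub, transpose_one, Matrix.mul_add, Matrix.add_mul,
      Matrix.mul_sub, Matrix.sub_mul, Matrix.mul_one, Matrix.one_mul]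
    module
  rw [e5, smul_eq_zero]
  simp [h2]

theorem icy_cy (h2 : (2 : F) ≠ 0) (a : V6 F) : icy (cy (nm a)) = nm a := by
  have h4 : (4 : F) = 2 * 2 := by norm_num
  have h8 : (8 : F) = 2 * 2 * 2 := by norm_num
  obtain ⟨a12, a13, a14, a23, a24, a34⟩ := a
  ext i j
  fin_cases i <;> fin_cases j <;>
    simp [nm, cy, icy, Matrix.mul_apply, Fin.sum_univ_four, Matrix.one_apply, h4, h8] <;> field_simp <;> ring

theorem comm_iff (h2 : (2 : F) ≠ 0) (a b : V6 F) :
    cy (nm a) * cy (nm b) = cy (nm b) * cy (nm a) ↔ K6 a b := by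
  have e1 : cy (nm a) * cy (nm b) = cy (nm b) * cy (nm a) ↔ nm a * nm b = nm b * nm a := by
    constructor
    · intro h
      have h : Commute (cy (nm a)) (cy (nm b)) := h
      have : Commute (icy (cy (nm a))) (icy (cy (nm b))) := by
        unfold icy
        have h' : Commute (cy (nm a) - 1) (cy (nm b) - 1) :=
          (h.sub_right (Commute.one_right _)).sub_left (Commute.one_left _)
        have k : ∀ x y : M4 F, Commute x y → Commute x ((2⁻¹ : F) • y - (4⁻¹ : F) • (y * y) + (8⁻¹ : F) • (y * y * y)) := by
          intro x y h
          exact ((h.smul_right _).sub_right ((h.mul_right h).smul_right _)).add_right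
            (((h.mul_right h).mul_right h).smul_right _)
        exact k _ _ (k _ _ h'.symm).symm
      rw [icy_cy h2, icy_cy h2] at this
      exact this
    · intro h
      have h : Commute (nm a) (nm b) := h
      have k : ∀ x y : M4 F, Commute x y → Commute x (cy y) := by
        intro x y h
        exact (((Commute.one_right x).add_right (h.smul_right _)).add_right
          ((h.mul_right h).smul_right _)).add_right (((h.mul_right h).mul_right h).smul_right _)
      exact k _ _ (k _ _ h.symm).symm
  rw [e1]
  obtain ⟨a12, a13, a14, a23, a24, a34⟩ := a
  obtain ⟨b12, b13, b14, b23, b24, b34⟩ := b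
  rw [← Matrix.ext_iff]
  simp [nm, K6, Matrix.mul_apply, Fin.sum_univ_four, Fin.forall_fin_succ]
  tauto

theorem fix_iff (h2 : (2 : F) ≠ 0) (a : V6 F) (c11 c12 c13 c14 c22 c23 c24 c33 c34 c44 : F) :
    cj (cy (nm a))ᵀ (syEquiv (c11, c12, c13, c14, c22, c23, c24, c33, c34, c44)) =
      syEquiv (c11, c12, c13, c14, c22, c23, c24, c33, c34, c44) ↔
      E6 c11 c12 c13 c14 c22 c23 c24 c33 c34 a := by
  have e1 : cj (cy (nm a))ᵀ (syEquiv (c11, c12, c13, c14, c22, c23, c24, c33, c34, c44)) =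
      syEquiv (c11, c12, c13, c14, c22, c23, c24, c33, c34, c44) ↔
      (cy (nm a))ᵀ * sm (c11, c12, c13, c14, c22, c23, c24, c33, c34, c44) * cy (nm a) =
      sm (c11, c12, c13, c14, c22, c23, c24, c33, c34, c44) := by
    rw [Subtype.ext_iff]
    simp [cj, syEquiv]
  rw [e1, cy_fix h2 _ _ (nm_pow a)]
  obtain ⟨a12, a13, a14, a23, a24, a34⟩ := a
  rw [← Matrix.ext_iff]
  simp [nm, E6, sm, Matrix.mul_apply, Fin.sum_univ_four, Fin.forall_fin_succ, -mul_eq_zero, and_assoc]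
  clear e1
  intro e1 e2
  have half : ∀ x y : F, y = 2 * x → y = 0 → x = 0 := by
    intro x y h h'
    rw [h'] at h
    simpa [h2] using h.symm
  constructor
  · rintro ⟨e3, e4, e5, e6, e7, e8, e9, e10, e11, e12, e13, e14, e15⟩
    refine ⟨?_, half _ _ ?_ e5, ?_, ?_, half _ _ ?_ e10, ?_, half _ _ ?_ e15⟩
    · linear_combination e3
    · ring
    · linear_combination e6
    · linear_combination e7
    · ring
    · linear_combination e11
    · ring
  · rintro ⟨e3, e4, e5, e6, e7, e8, e9⟩
    refine ⟨?_, ?_, ?_, ?_, ?_, ?_, ?_, ?_, ?_, ?_, ?_, ?_, ?_⟩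
    · linear_combination e3
    · linear_combination e1
    · linear_combination 2 * e4
    · linear_combination e5
    · linear_combination e6
    · linear_combination e2
    · linear_combination e5
    · linear_combination 2 * e7
    · linear_combination e8
    · linear_combination e3
    · linear_combination e6
    · linear_combination e8
    · linear_combination 2 * e9

theorem total (h2 : (2 : F) ≠ 0) {v : ℕ} (hv : Nat.card F = v + 1) :
    Nat.card {x : (V6 F × Sy F) × (V6 F × Sy F) //
      cy (nm x.1.1) * cy (nm x.2.1) = cy (nm x.2.1) * cy (nm x.1.1) ∧
      x.1.2 + cj (cy (nm x.1.1)) x.2.2 = x.2.2 + cj (cy (nm x.2.1)) x.1.2} =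
    (v + 1) ^ 16 * (v ^ 6 + 11 * v ^ 5 + 48 * v ^ 4 + 88 * v ^ 3 + 64 * v ^ 2 + 16 * v + 1) := by
  classical
  have e1 : Nat.card {x : (V6 F × Sy F) × (V6 F × Sy F) //
      cy (nm x.1.1) * cy (nm x.2.1) = cy (nm x.2.1) * cy (nm x.1.1) ∧
      x.1.2 + cj (cy (nm x.1.1)) x.2.2 = x.2.2 + cj (cy (nm x.2.1)) x.1.2} =
      Nat.card {x : (V6 F × V6 F) × (Sy F × Sy F) // K6 x.1.1 x.1.2 ∧
        x.2.1 + cj (cy (nm x.1.1)) x.2.2 = x.2.2 + cj (cy (nm x.1.2)) x.2.1} := by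
    apply Nat.card_congr
    apply (Equiv.prodProdProdComm _ _ _ _).subtypeEquiv
    rintro ⟨⟨a, S⟩, b, T⟩
    simp only [Equiv.prodProdProdComm_apply, comm_iff h2]
  have : Finite (Sy F) := Finite.of_equiv _ (syEquiv (F := F))
  rw [e1, card_fib (α := V6 F × V6 F) (β := Sy F × Sy F) (fun y x => K6 y.1 y.2 ∧
        x.1 + cj (cy (nm y.1)) x.2 = x.2 + cj (cy (nm y.2)) x.1)]
  have e2 : ∀ y : V6 F × V6 F, Nat.card {x : Sy F × Sy F // K6 y.1 y.2 ∧
        x.1 + cj (cy (nm y.1)) x.2 = x.2 + cj (cy (nm y.2)) x.1} =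
        (v + 1) ^ 10 * Nat.card {C : V10 F // K6 y.1 y.2 ∧ cj (cy (nm y.1))ᵀ (syEquiv C) = syEquiv C ∧
          cj (cy (nm y.2))ᵀ (syEquiv C) = syEquiv C} := by
    rintro ⟨a, b⟩
    by_cases hK : K6 a b
    · simp only [hK, true_and]
      rw [card_pairs h2, card_Sy, hv]
      congr 1
      apply Nat.card_congr
      apply (syEquiv.symm).subtypeEquiv
      intro C
      simp
    · simp [hK]
  simp only [e2]
  rw [← Finset.mul_sum, ← card_fib (α := V6 F × V6 F) (β := V10 F) (fun y C => K6 y.1 y.2 ∧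
    cj (cy (nm y.1))ᵀ (syEquiv C) = syEquiv C ∧ cj (cy (nm y.2))ᵀ (syEquiv C) = syEquiv C)]
  have e3 : Nat.card {x : (V6 F × V6 F) × V10 F // K6 x.1.1 x.1.2 ∧
      cj (cy (nm x.1.1))ᵀ (syEquiv x.2) = syEquiv x.2 ∧
      cj (cy (nm x.1.2))ᵀ (syEquiv x.2) = syEquiv x.2} =
      Nat.card {x : V10 F × (V6 F × V6 F) //
      (cj (cy (nm x.2.1))ᵀ (syEquiv x.1) = syEquiv x.1 ∧
      cj (cy (nm x.2.2))ᵀ (syEquiv x.1) = syEquiv x.1) ∧ K6 x.2.1 x.2.2} := by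
    apply Nat.card_congr
    apply (Equiv.prodComm _ _).subtypeEquiv
    rintro ⟨y, C⟩
    simp only [Equiv.prodComm_apply, Prod.swap]
    tauto
  rw [e3, card_fib (α := V10 F) (β := V6 F × V6 F) (fun C y =>
     (cj (cy (nm y.1))ᵀ (syEquiv C) = syEquiv C ∧ cj (cy (nm y.2))ᵀ (syEquiv C) = syEquiv C) ∧ K6 y.1 y.2)]
  simp only [Fintype.sum_prod_type]
  have e4 : ∀ c11 c12 c13 c14 c22 c23 c24 c33 c34 c44 : F, Nat.card {y : V6 F × V6 F //
      (cj (cy (nm y.1))ᵀ (syEquiv (c11, c12, c13, c14, c22, c23, c24, c33, c34, c44)) = syEquiv (c11, c12, c13, c14, c22, c23, c24, c33, c34, c44) ∧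
      cj (cy (nm y.2))ᵀ (syEquiv (c11, c12, c13, c14, c22, c23, c24, c33, c34, c44)) = syEquiv (c11, c12, c13, c14, c22, c23, c24, c33, c34, c44)) ∧ K6 y.1 y.2} =
      N6 c11 c12 c13 c14 c22 c23 c24 c33 c34 := by
    intros
    simp only [fix_iff h2, and_assoc, N6]
  simp only [e4, sum_const' hv, ← Finset.mul_sum]
  rw [sum_N6 hv]
  ring

end cayley
end SpEight

namespace SpEight
section param
open Matrix
variable {F : Type*} [Field F] [Fintype F]

abbrev Sp (F : Type*) [Field F] := Matrix.symplecticGroup (Fin 4) F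

theorem mem_blocks (g b d : M4 F) : fromBlocks g b 0 d ∈ Sp F ↔
    g * dᵀ = 1 ∧ g * bᵀ = b * gᵀ := by
  rw [SymplecticGroup.mem_iff, J, fromBlocks_transpose, fromBlocks_multiply, fromBlocks_multiply,
    fromBlocks_inj]
  simp only [Matrix.mul_zero, Matrix.zero_mul, Matrix.mul_one, Matrix.mul_neg, Matrix.neg_mul,
    zero_add, add_zero, transpose_zero, neg_inj, and_true]
  constructor
  · rintro ⟨h1, h2, h3⟩
    refine ⟨h2, ?_⟩
    rw [← sub_eq_zero, ← neg_sub, neg_eq_zero, sub_eq_add_neg]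
    exact h1
  · rintro ⟨h1, h2⟩
    refine ⟨by rw [h2]; simp, h1, ?_⟩
    rw [← transpose_inj]
    simpa using h1

/-- upper unitriangular matrices -/
def UT (g : M4 F) : Prop :=
  g 0 0 = 1 ∧ g 1 1 = 1 ∧ g 2 2 = 1 ∧ g 3 3 = 1 ∧ g 1 0 = 0 ∧ g 2 0 = 0 ∧ g 3 0 = 0 ∧ g 2 1 = 0 ∧
  g 3 1 = 0 ∧ g 3 2 = 0

theorem UT_mul {g h : M4 F} (hg : UT g) (hh : UT h) : UT (g * h) := by
  obtain ⟨e1, e2, e3, e4, e5, e6, e7, e8, e9, e10⟩ := hg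
  obtain ⟨f1, f2, f3, f4, f5, f6, f7, f8, f9, f10⟩ := hh
  simp [UT, Matrix.mul_apply, Fin.sum_univ_four, *]

def UU (F : Type*) [Field F] [Fintype F] : Subgroup (Sp F) :=
  let U : Submonoid (Sp F) :=
   {carrier := {M | M.1.toBlocks₂₁ = 0 ∧ UT M.1.toBlocks₁₁}
    one_mem' := by
      refine ⟨?_, ?_⟩
      · show (1 : Matrix (Fin 4 ⊕ Fin 4) (Fin 4 ⊕ Fin 4) F).toBlocks₂₁ = 0
        rw [← fromBlocks_one, toBlocks_fromBlocks₂₁]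
      · show UT (1 : Matrix (Fin 4 ⊕ Fin 4) (Fin 4 ⊕ Fin 4) F).toBlocks₁₁
        rw [← fromBlocks_one, toBlocks_fromBlocks₁₁]; simp [UT]
    mul_mem' := by
      rintro ⟨M, hM⟩ ⟨N, hN⟩ ⟨h1, h2⟩ ⟨h3, h4⟩
      simp only at h1 h2 h3 h4
      have e : M * N = fromBlocks (M.toBlocks₁₁ * N.toBlocks₁₁)
          (M.toBlocks₁₁ * N.toBlocks₁₂ + M.toBlocks₁₂ * N.toBlocks₂₂) 0
          (M.toBlocks₂₂ * N.toBlocks₂₂) := by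
        conv_lhs => rw [← fromBlocks_toBlocks M, ← fromBlocks_toBlocks N, fromBlocks_multiply]
        simp [h1, h3]
      refine ⟨?_, ?_⟩
      · show (M * N).toBlocks₂₁ = 0
        rw [e]; simp
      · show UT (M * N).toBlocks₁₁
        rw [e]; simpa using UT_mul h2 h4}
  { U with
    inv_mem' := by
      intro x hx
      have hpos : 0 < Nat.card (Sp F) := Nat.card_pos
      have : x⁻¹ = x ^ (Nat.card (Sp F) - 1) := by
        rw [inv_eq_iff_mul_eq_one, mul_pow_sub_one hpos.ne', pow_card_eq_one']
      rw [this]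
      exact U.pow_mem hx _ }

theorem mem_UU (M : Sp F) : M ∈ UU F ↔ M.1.toBlocks₂₁ = 0 ∧ UT M.1.toBlocks₁₁ := Iff.rfl

theorem cy_inv (A : M4 F) (h : A * A * A * A = 0) : cy A * cy (-A) = 1 := by
  have h' : -A * -A * -A * -A = 0 := by simpa using h
  have e1 := cy_mul A h
  have e2 := cy_mul (-A) h'
  have e3 := inv_sub (-A) h'
  rw [sub_neg_eq_add] at e2 e3
  have : cy A * cy (-A) * (1 + A) = 1 + A := by
    rw [Matrix.mul_assoc, e2, ← sub_eq_add_neg, e1]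
  calc cy A * cy (-A) = (cy A * cy (-A) * (1 + A)) * (1 + -A + -A * -A + -A * -A * -A) := by
        rw [Matrix.mul_assoc _ (1 + A), e3, Matrix.mul_one]
    _ = 1 := by rw [this, e3]

def pm (x : V6 F × Sy F) : Matrix (Fin 4 ⊕ Fin 4) (Fin 4 ⊕ Fin 4) F :=
  fromBlocks (cy (nm x.1)) (x.2.1 * (cy (-nm x.1))ᵀ) 0 (cy (-nm x.1))ᵀ

theorem pm_mem (x : V6 F × Sy F) : pm x ∈ Sp F := by
  have h := cy_inv _ (nm_pow x.1)
  have hs : x.2.1ᵀ = x.2.1 := x.2.2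
  rw [pm, mem_blocks]
  refine ⟨by simpa using h, ?_⟩
  rw [transpose_mul, transpose_transpose, ← Matrix.mul_assoc, h, Matrix.one_mul, Matrix.mul_assoc,
    ← transpose_mul, h, hs]
  simp

theorem UT_cy (a : V6 F) : UT (cy (nm a)) := by
  obtain ⟨a12, a13, a14, a23, a24, a34⟩ := a
  simp [UT, cy, nm, Matrix.mul_apply, Fin.sum_univ_four]

theorem cy_icy (h2 : (2 : F) ≠ 0) (g : M4 F) (hg : UT g) : ∃ a, cy (nm a) = g := by
  have hh : 2 * (2⁻¹ : F) = 1 := mul_inv_cancel₀ h2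
  generalize (2⁻¹ : F) = h at hh
  refine ⟨(h * g 0 1, h * g 0 2 - h ^ 2 * (g 0 1 * g 1 2),
    h * g 0 3 - h ^ 2 * (g 0 1 * g 1 3 + g 0 2 * g 2 3) + h ^ 3 * (g 0 1 * g 1 2 * g 2 3), h * g 1 2,
    h * g 1 3 - h ^ 2 * (g 1 2 * g 2 3), h * g 2 3), ?_⟩
  obtain ⟨e1, e2, e3, e4, e5, e6, e7, e8, e9, e10⟩ := hg
  ext i j
  fin_cases i <;> fin_cases j <;>
    simp [nm, cy, Matrix.mul_apply, Fin.sum_univ_four, Matrix.one_apply, e1, e2, e3, e4, e5, e6, e7,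
      e8, e9, e10]
  · linear_combination g 0 1 * hh
  · linear_combination g 0 2 * hh
  · linear_combination g 0 3 * hh
  · linear_combination g 1 2 * hh
  · linear_combination g 1 3 * hh
  · linear_combination g 2 3 * hh

theorem nm_inj {a b : V6 F} (h : nm a = nm b) : a = b := by
  obtain ⟨a12, a13, a14, a23, a24, a34⟩ := a
  obtain ⟨b12, b13, b14, b23, b24, b34⟩ := b
  rw [← Matrix.ext_iff] at h
  simp [nm, Fin.forall_fin_succ] at h
  simp only [Prod.mk.injEq]
  tauto

def pmU (x : V6 F × Sy F) : UU F := ⟨⟨pm x, pm_mem x⟩, by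
  rw [mem_UU]
  simpa [pm] using UT_cy x.1⟩

theorem pmU_bij (h2 : (2 : F) ≠ 0) : Function.Bijective (pmU (F := F)) := by
  constructor
  · rintro ⟨a, S⟩ ⟨b, T⟩ h
    have h : pm (a, S) = pm (b, T) := congrArg (fun x : UU F => x.1.1) h
    simp only [pm, fromBlocks_inj] at h
    obtain ⟨h1, h3, -, -⟩ := h
    have hab : a = b := by
      apply nm_inj
      rw [← icy_cy h2, h1, icy_cy h2]
    subst hab
    have e := cy_inv _ (nm_pow a)
    have : S = T := by
      ext1
      have := congrArg (· * (cy (nm a))ᵀ) h3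
      simpa only [Matrix.mul_assoc, ← transpose_mul, e, transpose_one, Matrix.mul_one] using this
    rw [this]
  · rintro ⟨⟨M, hM⟩, h1, hU⟩
    simp only at h1 hU
    obtain ⟨a, ha⟩ := cy_icy h2 _ hU
    have hM' := hM
    rw [← fromBlocks_toBlocks M, h1, mem_blocks] at hM'
    obtain ⟨k1, k2⟩ := hM'
    have e := cy_inv _ (nm_pow a)
    rw [ha] at e
    have e' : cy (-nm a) * M.toBlocks₁₁ = 1 := mul_eq_one_comm.mp e
    have hd : M.toBlocks₂₂ = (cy (-nm a))ᵀ := by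
      rw [← transpose_inj, transpose_transpose, ← Matrix.one_mul M.toBlocks₂₂ᵀ, ← e', Matrix.mul_assoc, k1,
        Matrix.mul_one]
    refine ⟨(a, ⟨M.toBlocks₁₂ * M.toBlocks₁₁ᵀ, by rw [mem_Sy, transpose_mul, transpose_transpose, k2]⟩), ?_⟩
    apply Subtype.ext
    apply Subtype.ext
    show pm _ = M
    rw [pm]
    conv_rhs => rw [← fromBlocks_toBlocks M, h1, hd]
    simp only [ha]
    rw [Matrix.mul_assoc, ← transpose_mul, e', transpose_one, Matrix.mul_one]

theorem pm_comm (x y : V6 F × Sy F) : pm x * pm y = pm y * pm x ↔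
      cy (nm x.1) * cy (nm y.1) = cy (nm y.1) * cy (nm x.1) ∧
      x.2 + cj (cy (nm x.1)) y.2 = y.2 + cj (cy (nm y.1)) x.2 := by
  obtain ⟨a, S⟩ := x
  obtain ⟨b, T⟩ := y
  have ea := cy_inv _ (nm_pow a)
  have eb := cy_inv _ (nm_pow b)
  simp only [pm, fromBlocks_multiply, fromBlocks_inj, Matrix.mul_zero, Matrix.zero_mul, add_zero,
    zero_add, true_and]
  set g := cy (nm a)
  set h := cy (nm b)
  set gi := cy (-nm a)
  set hi := cy (-nm b)
  have ea' : gi * g = 1 := mul_eq_one_comm.mp ea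
  have eb' : hi * h = 1 := mul_eq_one_comm.mp eb
  have ta : giᵀ * gᵀ = 1 := by rw [← transpose_mul, ea, transpose_one]
  have tb : hiᵀ * hᵀ = 1 := by rw [← transpose_mul, eb, transpose_one]
  have ta' : gᵀ * giᵀ = 1 := mul_eq_one_comm.mp ta
  have tb' : hᵀ * hiᵀ = 1 := mul_eq_one_comm.mp tb
  have hS : S + cj g T = T + cj h S ↔ S.1 + g * T.1 * gᵀ = T.1 + h * S.1 * hᵀ := by
    rw [Subtype.ext_iff]
    simp [cj]
  rw [hS]
  have key : g * h = h * g →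
    ((g * (T.1 * hiᵀ) + S.1 * giᵀ * hiᵀ = h * (S.1 * giᵀ) + T.1 * hiᵀ * giᵀ) ↔
      S.1 + g * T.1 * gᵀ = T.1 + h * S.1 * hᵀ) := by
    intro hc
    have tc : hᵀ * gᵀ = gᵀ * hᵀ := by rw [← transpose_mul, ← transpose_mul, hc]
    have l1 : (g * (T.1 * hiᵀ) + S.1 * giᵀ * hiᵀ) * (hᵀ * gᵀ) = S.1 + g * T.1 * gᵀ := by
      have : (g * (T.1 * hiᵀ) + S.1 * giᵀ * hiᵀ) * (hᵀ * gᵀ) =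
        g * T.1 * (hiᵀ * hᵀ) * gᵀ + S.1 * giᵀ * (hiᵀ * hᵀ) * gᵀ := by
        simp only [Matrix.add_mul, Matrix.mul_assoc]
      rw [this, tb, Matrix.mul_one, Matrix.mul_one, Matrix.mul_assoc S.1, ta, Matrix.mul_one, add_comm]
    have l2 : (h * (S.1 * giᵀ) + T.1 * hiᵀ * giᵀ) * (hᵀ * gᵀ) = T.1 + h * S.1 * hᵀ := by
      have : (h * (S.1 * giᵀ) + T.1 * hiᵀ * giᵀ) * (gᵀ * hᵀ) =
        h * S.1 * (giᵀ * gᵀ) * hᵀ + T.1 * hiᵀ * (giᵀ * gᵀ) * hᵀ := by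
        simp only [Matrix.add_mul, Matrix.mul_assoc]
      rw [tc, this, ta, Matrix.mul_one, Matrix.mul_one, Matrix.mul_assoc T.1, tb, Matrix.mul_one, add_comm]
    rw [← l1, ← l2]
    constructor
    · intro k; rw [k]
    · intro k
      have := congrArg (· * (giᵀ * hiᵀ)) k
      have u : (hᵀ * gᵀ) * (giᵀ * hiᵀ) = 1 := by
        rw [Matrix.mul_assoc, ← Matrix.mul_assoc gᵀ, ta', Matrix.one_mul, tb']
      simpa only [Matrix.mul_assoc _ (hᵀ * gᵀ), u, Matrix.mul_one] using this
  constructor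
  · rintro ⟨h1, h3, -⟩
    exact ⟨h1, (key h1).1 h3⟩
  · rintro ⟨h1, h3⟩
    refine ⟨h1, (key h1).2 h3, ?_⟩
    rw [← transpose_mul, ← transpose_mul]
    congr 1
    apply left_inv_eq_right_inv (a := g * h)
    · rw [Matrix.mul_assoc, ← Matrix.mul_assoc gi, ea', Matrix.one_mul, eb']
    · rw [h1, Matrix.mul_assoc, ← Matrix.mul_assoc g, ea, Matrix.one_mul, eb]

theorem card_UU (h2 : (2 : F) ≠ 0) : Nat.card (UU F) = Nat.card F ^ 16 := by
  rw [← Nat.card_congr (Equiv.ofBijective _ (pmU_bij h2))]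
  rw [Nat.card_prod, card_Sy]
  simp only [Nat.card_prod]
  ring

theorem card_comm_UU (h2 : (2 : F) ≠ 0) {v : ℕ} (hv : Nat.card F = v + 1) :
    Nat.card {x : UU F × UU F // Commute x.1 x.2} =
    (v + 1) ^ 16 * (v ^ 6 + 11 * v ^ 5 + 48 * v ^ 4 + 88 * v ^ 3 + 64 * v ^ 2 + 16 * v + 1) := by
  rw [← total h2 hv]
  symm
  apply Nat.card_congr
  let e := Equiv.ofBijective _ (pmU_bij h2)
  apply (e.prodCongr e).subtypeEquiv
  rintro ⟨x, y⟩
  rw [← pm_comm]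
  show _ ↔ pmU x * pmU y = pmU y * pmU x
  rw [Subtype.ext_iff, Subtype.ext_iff]
  rfl

theorem card_conj_UU (h2 : (2 : F) ≠ 0) {v : ℕ} (hv : Nat.card F = v + 1) :
    Nat.card (ConjClasses (UU F)) =
     v ^ 6 + 11 * v ^ 5 + 48 * v ^ 4 + 88 * v ^ 3 + 64 * v ^ 2 + 16 * v + 1 := by
  have h := card_comm_eq_card_conjClasses_mul_card (UU F)
  rw [card_comm_UU h2 hv, card_UU h2, hv, mul_comm] at h
  have hw : (v + 1) ^ 16 ≠ 0 := pow_ne_zero _ (Nat.succ_ne_zero v)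
  generalize (v + 1) ^ 16 = w at h hw
  exact (mul_right_cancel₀ hw h).symm

end param
end SpEight

namespace SpEight
section sylow
open Matrix
variable {F : Type*} [Field F] [Fintype F]

theorem exists_fixed {p : ℕ} [Fact p.Prime] (hpF : p ∣ Nat.card F) {G V : Type*} [Group G]
    (hG : IsPGroup p G) [AddCommGroup V] [Module F V] [Finite V] (ρ : G →* (V →ₗ[F] V))
    (W : Submodule F V) (hW : ∀ g, W ≤ W.comap (ρ g)) (hne : W ≠ ⊤) :
    ∃ v, v ∉ W ∧ ∀ g, ρ g v - v ∈ W := by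
  have hfin : Module.Finite F V := Module.Finite.of_finite
  let act : MulAction G (V ⧸ W) :=
    { smul := fun g x => W.mapQ W (ρ g) (hW g) x
      one_smul := by
        intro x
        induction x using Submodule.Quotient.induction_on with
        | _ x =>
          show W.mapQ W (ρ 1) (hW 1) (Submodule.Quotient.mk x) = _
          rw [Submodule.mapQ_apply]; simp
      mul_smul := by
        intro g h x
        induction x using Submodule.Quotient.induction_on with
        | _ x =>
          show W.mapQ W (ρ (g * h)) (hW _) (Submodule.Quotient.mk x) =
            W.mapQ W (ρ g) (hW g) (W.mapQ W (ρ h) (hW h) (Submodule.Quotient.mk x))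
          rw [Submodule.mapQ_apply, Submodule.mapQ_apply, Submodule.mapQ_apply]; simp }
  have hact : ∀ (g : G) (x : V), g • (Submodule.Quotient.mk x : V ⧸ W) = Submodule.Quotient.mk (ρ g x) :=
    fun g x => rfl
  have hfr : 0 < Module.finrank F (V ⧸ W) := by
    have := Submodule.finrank_quotient_add_finrank W
    have := Submodule.finrank_lt hne
    omega
  have hdvd : p ∣ Nat.card (V ⧸ W) := by
    rw [Module.natCard_eq_pow_finrank (K := F)]
    exact dvd_pow hpF hfr.ne'
  have h0 : (0 : V ⧸ W) ∈ MulAction.fixedPoints G (V ⧸ W) := by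
    intro g
    rw [← Submodule.Quotient.mk_zero, hact, map_zero]
  have hfq : Finite (V ⧸ W) := Finite.of_surjective _ (Submodule.Quotient.mk_surjective W)
  obtain ⟨b, hb, hb0⟩ := hG.exists_fixed_point_of_prime_dvd_card_of_fixed_point (V ⧸ W) hdvd h0
  obtain ⟨v, rfl⟩ := Submodule.Quotient.mk_surjective W b
  refine ⟨v, ?_, ?_⟩
  · intro hv
    exact hb0 ((Submodule.Quotient.mk_eq_zero W).2 hv).symm
  · intro g
    have := hb g
    rw [hact] at this
    exact (Submodule.Quotient.eq W).1 this

abbrev V8 (F : Type*) := Fin 4 ⊕ Fin 4 → F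

def Vk (F : Type*) [Field F] (k : ℕ) : Submodule F (V8 F) where
  carrier := {v | (∀ i : Fin 4, k ≤ i.1 → v (Sum.inl i) = 0) ∧ ∀ i, v (Sum.inr i) = 0}
  add_mem' := by
    rintro a b ⟨h1, h2⟩ ⟨h3, h4⟩
    exact ⟨fun i hi => by simp [h1 i hi, h3 i hi], fun i => by simp [h2 i, h4 i]⟩
  zero_mem' := by constructor <;> simp
  smul_mem' := by
    rintro c a ⟨h1, h2⟩
    exact ⟨fun i hi => by simp [h1 i hi], fun i => by simp [h2 i]⟩

theorem mem_Vk (k : ℕ) (v : V8 F) : v ∈ Vk F k ↔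
  (∀ i : Fin 4, k ≤ i.1 → v (Sum.inl i) = 0) ∧ ∀ i, v (Sum.inr i) = 0 := Iff.rfl

theorem Vk_mono {k l : ℕ} (h : k ≤ l) : Vk F k ≤ Vk F l :=
  fun _ hv => ⟨fun i hi => hv.1 i (h.trans hi), hv.2⟩

def eb (i : Fin 4) : V8 F := Pi.single (Sum.inl i) 1

theorem eb_mem (i : Fin 4) : (eb i : V8 F) ∈ Vk F (i.1 + 1) := by
  constructor
  · intro j hj
    have : j ≠ i := by rintro rfl; omega
    simp [eb, this]
  · intro j; simp [eb]

theorem Vk_expand {k : ℕ} {v : V8 F} (h : v ∈ Vk F k) :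
    v = ∑ i : Fin 4, if i.1 < k then v (Sum.inl i) • eb i else 0 := by
  ext j
  rcases j with j | j
  · simp only [Finset.sum_apply]
    rw [Finset.sum_eq_single j]
    · split_ifs with hj
      · simp [eb]
      · simpa using h.1 j (not_lt.1 hj)
    · intro b _ hb
      split_ifs
      · simp [eb, hb.symm]
      · rfl
    · simp
  · rw [h.2 j, Finset.sum_apply, Finset.sum_eq_zero]
    intro b _
    split_ifs <;> simp [eb]

/-- vectors fixed by `UU` modulo `Vk k` -/
theorem fixed_UU (h2 : (2 : F) ≠ 0) (k : Fin 4) (v : V8 F)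
    (h : ∀ g ∈ UU F, g.1 *ᵥ v - v ∈ Vk F k.1) : v ∈ Vk F (k.1 + 1) := by
  have hS : ∀ i, v (Sum.inr i) = 0 := by
    have key : ∀ S : Sy F, (S.1 *ᵥ (v ∘ Sum.inr)) 3 = 0 := by
      intro S
      have := (h _ (pmU (0, S)).2).1 3 (by omega)
      have e : (pmU (0, S)).1.1 = fromBlocks 1 S.1 0 1 := by
        show pm (0, S) = _
        have : nm (0 : V6 F) = 0 := by
          ext i j; fin_cases i <;> fin_cases j <;> rfl
        simp [pm, this, cy]
      rw [e] at this
      simpa [fromBlocks_mulVec] using this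
    intro i
    have h1 := key (syEquiv (0, 0, 0, 1, 0, 0, 0, 0, 0, 0))
    have h2 := key (syEquiv (0, 0, 0, 0, 0, 0, 1, 0, 0, 0))
    have h3 := key (syEquiv (0, 0, 0, 0, 0, 0, 0, 0, 1, 0))
    have h4 := key (syEquiv (0, 0, 0, 0, 0, 0, 0, 0, 0, 1))
    simp [syEquiv, sm, Matrix.mulVec, dotProduct, Fin.sum_univ_four] at h1 h2 h3 h4
    fin_cases i <;> assumption
  have hA : ∀ a : V6 F, ∀ i : Fin 4, k ≤ i → (cy (nm a) *ᵥ (v ∘ Sum.inl)) i = v (Sum.inl i) := by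
    intro a i hi
    have := (h _ (pmU (a, 0)).2).1 i hi
    have e : (pmU (a, 0)).1.1 = fromBlocks (cy (nm a)) 0 0 (cy (-nm a))ᵀ := by
      show pm (a, 0) = _
      simp [pm]
    rw [e] at this
    rw [← sub_eq_zero]
    simpa [fromBlocks_mulVec] using this
  refine ⟨?_, hS⟩
  intro i hi
  have h1 := hA (1, 0, 0, 0, 0, 0) 0
  have h3 := hA (0, 0, 0, 1, 0, 0) 1
  have h4 := hA (0, 0, 0, 0, 0, 1) 2
  clear hA h hS
  simp [cy, nm, Matrix.mulVec, dotProduct, Fin.sum_univ_four, Matrix.one_apply, Matrix.mul_apply, h2] at h1 h3 h4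
  have h1 := h1
  fin_cases k <;> fin_cases i <;> simp_all

theorem le_UU {p : ℕ} [Fact p.Prime] (hpF : p ∣ Nat.card F) (h2 : (2 : F) ≠ 0) (Q : Subgroup (Sp F))
    (hQ : IsPGroup p Q) (hU : UU F ≤ Q) : Q ≤ UU F := by
  let ρ : Q →* (V8 F →ₗ[F] V8 F) :=
    { toFun := fun g => Matrix.toLin' g.1.1
      map_one' := by
        show Matrix.toLin' (1 : Matrix _ _ F) = _
        rw [Matrix.toLin'_one]; rfl
      map_mul' := by
        intro g h
        show Matrix.toLin' (g.1.1 * h.1.1) = _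
        rw [Matrix.toLin'_mul]; rfl }
  have hρ : ∀ (g : Q) v, ρ g v = g.1.1 *ᵥ v := fun g v => by simp [ρ]
  have main : ∀ n : ℕ, ∀ k : Fin 4, k.1 < n → ∀ g : Q, ρ g (eb k) - eb k ∈ Vk F k.1 := by
    intro n
    induction n with
    | zero => intro k hk; omega
    | succ n ih =>
      intro k hk
      by_cases hkn : k.1 < n
      · exact ih k hkn
      have hkn : n = k.1 := by omega
      subst hkn
      have hW : ∀ g, Vk F k.1 ≤ (Vk F k.1).comap (ρ g) := by
        intro g v hv
        rw [Submodule.mem_comap, Vk_expand hv, map_sum]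
        apply Submodule.sum_mem
        intro i _
        split_ifs with hi
        · rw [map_smul]
          apply Submodule.smul_mem
          have e1 := ih i hi g
          have e2 : ρ g (eb i) = (ρ g (eb i) - eb i) + eb i := by abel
          rw [e2]
          exact Submodule.add_mem _ (Vk_mono hi.le e1) (Vk_mono hi (eb_mem i))
        · simp
      have hne : Vk F k.1 ≠ ⊤ := by
        intro h
        have : (eb k : V8 F) ∈ Vk F k.1 := by rw [h]; trivial
        have := this.1 k le_rfl
        simp [eb] at this
      obtain ⟨v, hv, hfix⟩ := exists_fixed hpF hQ ρ (Vk F k.1) hW hne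
      have hv1 : v ∈ Vk F (k.1 + 1) := by
        apply fixed_UU h2
        intro g hg
        have := hfix ⟨g, hU hg⟩
        rwa [hρ] at this
      set c := v (Sum.inl k) with hc
      have hw : v - c • eb k ∈ Vk F k.1 := by
        constructor
        · intro i hi
          by_cases hik : i = k
          · subst hik; simp [eb, hc]
          · have : k.1 + 1 ≤ i.1 := by
              have : i.1 ≠ k.1 := fun h => hik (Fin.ext h)
              omega
            simp [eb, hv1.1 i this, hik]
        · intro i
          simp [eb, hv1.2 i]
      have hc0 : c ≠ 0 := by
        intro h
        rw [h] at hw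
        simp at hw
        exact hv hw
      intro g
      have e1 := hfix g
      have e2 := hW g hw
      rw [Submodule.mem_comap] at e2
      have e3 : c • (ρ g (eb k) - eb k) ∈ Vk F k.1 := by
        have : c • (ρ g (eb k) - eb k) = (ρ g v - v) - ρ g (v - c • eb k) + (v - c • eb k) := by
          rw [map_sub, map_smul, smul_sub]; abel
        rw [this]
        exact Submodule.add_mem _ (Submodule.sub_mem _ e1 e2) hw
      exact (Submodule.smul_mem_iff _ hc0).1 e3
  intro g hg
  have m : ∀ k : Fin 4, ρ ⟨g, hg⟩ (eb k) - eb k ∈ Vk F k.1 := fun k => main 4 k k.2 _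
  have col : ∀ (k : Fin 4) j, (ρ ⟨g, hg⟩ (eb k) : V8 F) j = g.1 j (Sum.inl k) := by
    intro k j
    rw [hρ]
    simp [eb]
  have c1 : ∀ k i : Fin 4, k.1 ≤ i.1 → g.1 (Sum.inl i) (Sum.inl k) = if i = k then 1 else 0 := by
    intro k i hki
    have := (m k).1 i hki
    rw [Pi.sub_apply, sub_eq_zero, col] at this
    rw [this]
    simp [eb, Pi.single_apply]
  have c2 : ∀ k i : Fin 4, g.1 (Sum.inr i) (Sum.inl k) = 0 := by
    intro k i
    have := (m k).2 i
    rw [Pi.sub_apply, sub_eq_zero, col] at this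
    rw [this]
    simp [eb, Pi.single_apply]
  rw [mem_UU]
  constructor
  · ext i k
    exact c2 k i
  · simp only [UT, toBlocks₁₁, of_apply]
    refine ⟨?_, ?_, ?_, ?_, ?_, ?_, ?_, ?_, ?_, ?_⟩ <;> rw [c1 _ _ (by decide)] <;> simp

end sylow
end SpEight

theorem card_conjClasses_sylow_sp8 (p q : ℕ) (hp : p.Prime) (hodd : Odd p)
    (hq : ∃ n : ℕ, 0 < n ∧ q = p ^ n)
    (F : Type*) [Field F] [Fintype F] (hF : Fintype.card F = q)
    (P : Sylow p (Matrix.symplecticGroup (Fin 4) F)) (v : ℕ) (hv : v = q - 1) :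
    Nat.card (ConjClasses (P : Subgroup (Matrix.symplecticGroup (Fin 4) F))) =
      v ^ 6 + 11 * v ^ 5 + 48 * v ^ 4 + 88 * v ^ 3 + 64 * v ^ 2 + 16 * v + 1 := by
  obtain ⟨n, hn, rfl⟩ := hq
  have : Fact p.Prime := ⟨hp⟩
  have hcard : Nat.card F = p ^ n := by rw [Nat.card_eq_fintype_card, hF]
  have hv' : Nat.card F = v + 1 := by
    have : 0 < p ^ n := pow_pos hp.pos n
    omega
  have hpF : p ∣ Nat.card F := by rw [hcard]; exact dvd_pow_self p hn.ne'
  have h2 : (2 : F) ≠ 0 := by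
    apply Ring.two_ne_zero
    intro h
    have := FiniteField.even_card_of_char_two h
    have ho : Odd (Fintype.card F) := by rw [hF]; exact hodd.pow
    rw [Nat.odd_iff] at ho
    omega
  have hUp : IsPGroup p (SpEight.UU F) := by
    apply IsPGroup.of_card (n := n * 16)
    rw [SpEight.card_UU h2, hcard, pow_mul]
  obtain ⟨Q, hQ⟩ := hUp.exists_le_sylow
  have hQU : (Q : Subgroup (Matrix.symplecticGroup (Fin 4) F)) = SpEight.UU F :=
    le_antisymm (SpEight.le_UU hpF h2 Q Q.isPGroup' hQ) hQ
  have e1 : (P : Subgroup (Matrix.symplecticGroup (Fin 4) F)) ≃* (SpEight.UU F) :=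
    (Sylow.equiv P Q).trans (MulEquiv.subgroupCongr hQU)
  rw [← SpEight.card_conj_UU h2 hv']
  apply Nat.card_congr
  exact {
    toFun := ConjClasses.map (e1 : _ →* _)
    invFun := ConjClasses.map (e1.symm : _ →* _)
    left_inv := by
      intro x
      obtain ⟨a, rfl⟩ := ConjClasses.mk_surjective x
      show ConjClasses.mk (e1.symm (e1 a)) = _
      rw [e1.symm_apply_apply]
    right_inv := by
      intro x
      obtain ⟨a, rfl⟩ := ConjClasses.mk_surjective x
      show ConjClasses.mk (e1 (e1.symm a)) = _
      rw [e1.apply_symm_apply] }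
end
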